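/- arXiv:2512.07759 — 3 statements merged into one kernel-verified Lean document; each statement's English description precedes it below -/
import Mathlib

section
/- Let n ≥ 3 with n ≠ 4, and let f ∈ Aut(F_n). Assume: (1) there exist distinct 1 ≤ i, j ≤ n with the conjugation automorphism C_{x_i x_j} ∈ N(f); (2) there exist distinct 1 ≤ k, r ≤ n with e_{k,r}⁴ ∈ ρ(N(f)); (3) there exists Φ ∈ ρ(N(f)) with Φ ≢ I (mod 2). Then N(f) = SAut(F_n) if det(f̄) = 1, and N(f) = Aut(F_n) if det(f̄) = −1. -/
/-!
Nielsen reduction shows that `Aut(F_n)` is generated by signed permutations and the automorphisms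
`x_j ↦ x_j x_i`. Modulo the normal closure of the conjugations `x_j ↦ x_i x_j x_i⁻¹` these satisfy
Steinberg relations, which already force every element acting trivially on `ℤ ^ n` to be trivial.
So a normal subgroup `N` containing one such conjugation contains the whole kernel `IA n` of `ρ`
(Magnus), and membership in `N` depends only on matrices.

An element of `N` that is nontrivial modulo `2` has an odd off-diagonal entry. The Euclidean
algorithm, run by conjugating with transvections, clears another entry of the same column, and
iterated commutators with transvections then produce `e_{i,j} ^ s ∈ ρ(N)` with `s` odd. Together
with `e_{k,r} ^ 2 ^ m` this gives all transvections, hence `SAut n ≤ N`.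
-/

open Matrix

namespace NormalClosurePaper

/-- The automorphism group of the free group on `n` generators. -/
abbrev FrAut (n : ℕ) := MulAut (FreeGroup (Fin n))

/-- Exponent sum of the generator `x_i` in a word of the free group. -/
def expSum {n : ℕ} (i : Fin n) : FreeGroup (Fin n) →* Multiplicative ℤ :=
  FreeGroup.lift fun j => Multiplicative.ofAdd (if j = i then (1 : ℤ) else 0)

/-- The abelianized matrix of an automorphism of the free group:
the `(i, j)` entry is the exponent sum of `x_i` in `f x_j`. -/
def mat {n : ℕ} (f : FrAut n) : Matrix (Fin n) (Fin n) ℤ :=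
  Matrix.of fun i j => (expSum i (f (FreeGroup.of j))).toAdd

lemma expSum_apply {n : ℕ} (f : FrAut n) (i : Fin n) (w : FreeGroup (Fin n)) :
    (expSum i (f w)).toAdd = ∑ k, mat f i k * (expSum k w).toAdd := by
  induction w using FreeGroup.induction_on with
  | C1 => simp
  | of j =>
      have h : (expSum i (f (FreeGroup.of j))).toAdd = mat f i j := rfl
      rw [h]
      simp [expSum, mul_ite, Finset.sum_ite_eq]
  | inv_of j ih =>
      simp only [_root_.map_inv, toAdd_inv, mul_neg, Finset.sum_neg_distrib, ih]
  | mul x y ihx ihy =>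
      simp only [_root_.map_mul, toAdd_mul, mul_add, Finset.sum_add_distrib, ihx, ihy]

lemma mat_one {n : ℕ} : mat (1 : FrAut n) = 1 := by
  ext i j
  simp [mat, expSum, Matrix.one_apply, eq_comm]

lemma mat_mul {n : ℕ} (f g : FrAut n) : mat (f * g) = mat f * mat g := by
  ext i j
  rw [Matrix.mul_apply]
  show (expSum i ((f * g) (FreeGroup.of j))).toAdd = _
  rw [show (f * g) (FreeGroup.of j) = f (g (FreeGroup.of j)) from rfl, expSum_apply]
  rfl

/-- The matrix of the induced map on the abelianization, as a monoid homomorphism. -/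
def matHom (n : ℕ) : FrAut n →* Matrix (Fin n) (Fin n) ℤ where
  toFun := mat
  map_one' := mat_one
  map_mul' := mat_mul

/-- The homomorphism `Aut(F_n) → GL_n(ℤ)` induced by abelianization. -/
def ρ (n : ℕ) : FrAut n →* GL (Fin n) ℤ := (matHom n).toHomUnits

/-- The composition of `ρ` with the determinant. -/
def detρ (n : ℕ) : FrAut n →* ℤˣ := (Matrix.GeneralLinearGroup.det).comp (ρ n)

/-- The special automorphism group `SAut(F_n)`: automorphisms whose induced matrix
has determinant `1`. -/
def SAut (n : ℕ) : Subgroup (FrAut n) := (detρ n).ker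

/-- The Torelli subgroup `IA_n`, the kernel of `ρ`. -/
def IA (n : ℕ) : Subgroup (FrAut n) := (ρ n).ker

/-- The group of inner automorphisms of the free group. -/
def Inn (n : ℕ) : Subgroup (FrAut n) := (MulAut.conj (G := FreeGroup (Fin n))).range

instance Inn_normal (n : ℕ) : (Inn n).Normal := by
  constructor
  rintro - ⟨a, rfl⟩ g
  refine ⟨g a, ?_⟩
  ext y
  simp [MulAut.conj_apply, MulAut.mul_apply, _root_.map_mul, _root_.map_inv]

/-- The outer automorphism group `Out(F_n)`. -/
abbrev OutF (n : ℕ) := FrAut n ⧸ Inn n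

/-- The projection `Aut(F_n) → Out(F_n)`. -/
def toOut (n : ℕ) : FrAut n →* OutF n := QuotientGroup.mk' (Inn n)

lemma mat_conj {n : ℕ} (g : FreeGroup (Fin n)) : mat (MulAut.conj g) = 1 := by
  rw [← mat_one (n := n)]
  ext i j
  simp only [mat, Matrix.of_apply, MulAut.conj_apply, MulAut.one_apply, _root_.map_mul,
    _root_.map_inv, toAdd_mul, toAdd_inv]
  omega

lemma ρ_conj {n : ℕ} (g : FreeGroup (Fin n)) : ρ n (MulAut.conj g) = 1 :=
  Units.ext (mat_conj g)

/-- The homomorphism `Out(F_n) → GL_n(ℤ)` induced by abelianization. -/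
def ρOut (n : ℕ) : OutF n →* GL (Fin n) ℤ :=
  QuotientGroup.lift (Inn n) (ρ n) (by rintro - ⟨g, rfl⟩; exact ρ_conj g)

/-- The composition of `ρOut` with the determinant. -/
def detρOut (n : ℕ) : OutF n →* ℤˣ := (Matrix.GeneralLinearGroup.det).comp (ρOut n)

/-- The special outer automorphism group `SOut(F_n)`. -/
def SOut (n : ℕ) : Subgroup (OutF n) := (detρOut n).ker

/-- Entrywise reduction `GL_n(ℤ) → GL_n(ℤ/ℓℤ)`. -/
def redGL (n ℓ : ℕ) : GL (Fin n) ℤ →* GL (Fin n) (ZMod ℓ) :=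
  Units.map (RingHom.mapMatrix (Int.castRingHom (ZMod ℓ))).toMonoidHom

/-- The subgroup `GΓ_n(ℓ)` of `GL_n(ℤ)` of matrices congruent to the identity mod `ℓ`. -/
def GGamma (n ℓ : ℕ) : Subgroup (GL (Fin n) ℤ) := (redGL n ℓ).ker

/-- The level `ℓ` congruence subgroup `Γ_n(ℓ)` (viewed inside `GL_n(ℤ)`): matrices with
determinant `1` that are congruent to the identity mod `ℓ`. -/
def GammaGL (n ℓ : ℕ) : Subgroup (GL (Fin n) ℤ) :=
  GGamma n ℓ ⊓ (Matrix.GeneralLinearGroup.det).ker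

/-- Reduction `SL_n(ℤ) → SL_n(ℤ/ℓℤ)`. -/
def redSL (n ℓ : ℕ) : Matrix.SpecialLinearGroup (Fin n) ℤ →*
    Matrix.SpecialLinearGroup (Fin n) (ZMod ℓ) :=
  Matrix.SpecialLinearGroup.map (Int.castRingHom (ZMod ℓ))

/-- Projection `SL_n(ℤ/ℓℤ) → PSL_n(ℤ/ℓℤ)`. -/
def projPSL (n ℓ : ℕ) : Matrix.SpecialLinearGroup (Fin n) (ZMod ℓ) →*
    Matrix.ProjectiveSpecialLinearGroup (Fin n) (ZMod ℓ) :=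
  QuotientGroup.mk' _

section Steinberg

open Function

/-- A group `Γ` with elements modelled on the elementary matrices (`x i j`), the permutation
matrices (`perm σ`) and the diagonal sign matrices (`sign d`), subject to Steinberg-type relations,
together with a linear representation `rep` on `ι → ℤ` that takes them to those matrices. -/
structure SteinbergData (ι Γ : Type*) [DecidableEq ι] [Group Γ] where
  x : ι → ι → Γ
  perm : Equiv.Perm ι →* Γ
  sign : (ι → ℤˣ) →* Γ
  rep : Γ →* Module.End ℤ (ι → ℤ)
  x_commute_x : ∀ {i j k l}, i ≠ j → k ≠ l → j ≠ k → i ≠ l → Commute (x i j) (x k l)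
  x_mul_x : ∀ {i j k}, i ≠ j → j ≠ k → i ≠ k → x i j * x j k = x j k * x i k * x i j
  perm_mul_x : ∀ σ {i j}, i ≠ j → perm σ * x i j = x (σ i) (σ j) * perm σ
  sign_mul_x : ∀ d {i j}, i ≠ j → sign d * x i j = x i j ^ ((d i * d j : ℤˣ) : ℤ) * sign d
  perm_mul_sign : ∀ σ d, perm σ * sign d = sign (d ∘ σ.symm) * perm σ
  x_eq_mul_swap : ∀ {i j}, i ≠ j →
    x j i = x i j * perm (Equiv.swap i j) * sign (Pi.mulSingle j (-1)) * x i j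
  rep_x : ∀ {i j}, i ≠ j → ∀ v, rep (x i j) v = update v i (v i + v j)
  rep_perm : ∀ σ v, rep (perm σ) v = v ∘ σ.symm
  rep_sign : ∀ d v, rep (sign d) v = fun i => (d i : ℤ) * v i

lemma apply_mem_iff_of_forall_notMem {ι : Type*} {S : Set ι} {σ : Equiv.Perm ι}
    (hσ : ∀ i ∉ S, σ i = i) {i : ι} : σ i ∈ S ↔ i ∈ S :=
  ⟨fun h => by_contra fun hi => hi (hσ i hi ▸ h),
    fun h => by_contra fun hi => hi ((σ.injective (hσ _ hi)).symm ▸ h)⟩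

lemma symm_apply_eq_of_forall_notMem {ι : Type*} {S : Set ι} {σ : Equiv.Perm ι}
    (hσ : ∀ i ∉ S, σ i = i) : ∀ i ∉ S, σ.symm i = i :=
  fun i hi => σ.symm_apply_eq.2 (hσ i hi).symm

lemma swap_apply_of_notMem {ι : Type*} [DecidableEq ι] {S : Set ι} {i j : ι} (hi : i ∈ S)
    (hj : j ∈ S) : ∀ m ∉ S, Equiv.swap i j m = m :=
  fun _ hm => Equiv.swap_apply_of_ne_of_ne (ne_of_mem_of_not_mem hi hm).symm
    (ne_of_mem_of_not_mem hj hm).symm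

lemma mulSingle_apply_of_notMem {ι M : Type*} [DecidableEq ι] [One M] {S : Set ι} {j : ι}
    (hj : j ∈ S) (a : M) : ∀ m ∉ S, (Pi.mulSingle j a : ι → M) m = 1 :=
  fun _ hm => Pi.mulSingle_eq_of_ne (M := fun _ => M) (ne_of_mem_of_not_mem hj hm).symm a

lemma forall_notMem_of_insert {ι : Type*} {S : Set ι} {s : ι} {p : ι → Prop}
    (hS : ∀ i ∉ insert s S, p i) (hs : p s) : ∀ i ∉ S, p i := by
  intro i hi
  rcases eq_or_ne i s with rfl | his
  · exact hs
  · exact hS i (by simp [his, hi])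

lemma sum_update_sub_lt {ι : Type*} [DecidableEq ι] [Fintype ι] {v : ι → ℕ} {i j : ι}
    (hpos : 0 < v j) (hle : v j ≤ v i) : ∑ m, update v i (v i - v j) m < ∑ m, v m := by
  refine Finset.sum_lt_sum (fun m _ => ?_) ⟨i, Finset.mem_univ _, ?_⟩
  · grind [update_apply]
  · rw [update_self]; omega

namespace SteinbergData

variable {ι Γ : Type*} [DecidableEq ι] [Group Γ] (D : SteinbergData ι Γ)

/-- The subgroup generated by those elements `x i j`, `perm σ` and `sign d` which involve only
indices in `S` and whose matrix fixes the basis vectors with index in `F`. -/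
def fixing (F S : Set ι) : Subgroup Γ :=
  Subgroup.closure ({g | ∃ i ∈ S, ∃ j ∈ S, i ≠ j ∧ j ∉ F ∧ g = D.x i j} ∪
    {g | ∃ σ : Equiv.Perm ι, (∀ i ∉ S, σ i = i) ∧ (∀ i ∈ F, σ i = i) ∧ g = D.perm σ} ∪
    {g | ∃ d : ι → ℤˣ, (∀ i ∉ S, d i = 1) ∧ (∀ i ∈ F, d i = 1) ∧ g = D.sign d})

variable {D} {s i j k l : ι} {F S : Set ι} {v : ι → ℕ}

lemma x_mem_fixing (hi : i ∈ S) (hj : j ∈ S) (hij : i ≠ j) (hjF : j ∉ F) :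
    D.x i j ∈ D.fixing F S :=
  Subgroup.subset_closure (Or.inl (Or.inl ⟨i, hi, j, hj, hij, hjF, rfl⟩))

lemma perm_mem_fixing {σ : Equiv.Perm ι} (hS : ∀ i ∉ S, σ i = i) (hF : ∀ i ∈ F, σ i = i) :
    D.perm σ ∈ D.fixing F S :=
  Subgroup.subset_closure (Or.inl (Or.inr ⟨σ, hS, hF, rfl⟩))

lemma sign_mem_fixing {d : ι → ℤˣ} (hS : ∀ i ∉ S, d i = 1) (hF : ∀ i ∈ F, d i = 1) :
    D.sign d ∈ D.fixing F S :=
  Subgroup.subset_closure (Or.inr ⟨d, hS, hF, rfl⟩)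

lemma sign_mul_self (d : ι → ℤˣ) : D.sign d * D.sign d = 1 := by
  rw [← map_mul, show d * d = 1 from funext fun i => Int.units_mul_self (d i), map_one]

lemma sign_inv (d : ι → ℤˣ) : (D.sign d)⁻¹ = D.sign d :=
  inv_eq_of_mul_eq_one_right (sign_mul_self d)

lemma sign_mul_x_mul_sign (d : ι → ℤˣ) (hij : i ≠ j) :
    D.sign d * D.x i j * D.sign d = D.x i j ^ ((d i * d j : ℤˣ) : ℤ) := by
  rw [D.sign_mul_x d hij, mul_assoc, sign_mul_self, mul_one]

lemma x_inv (hij : i ≠ j) :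
    (D.x i j)⁻¹ = D.sign (Pi.mulSingle j (-1)) * D.x i j * D.sign (Pi.mulSingle j (-1)) := by
  simp [sign_mul_x_mul_sign _ hij, hij]

/-- No case for inverses is needed, since `x i j` is conjugate to its inverse by a sign change. -/
theorem fixing_induction {p : (g : Γ) → g ∈ D.fixing F S → Prop}
    (x : ∀ i j (hi : i ∈ S) (hj : j ∈ S) (hij : i ≠ j) (hjF : j ∉ F),
      p (D.x i j) (x_mem_fixing hi hj hij hjF))
    (perm : ∀ σ (hS : ∀ i ∉ S, σ i = i) (hF : ∀ i ∈ F, σ i = i),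
      p (D.perm σ) (perm_mem_fixing hS hF))
    (sign : ∀ d (hS : ∀ i ∉ S, d i = 1) (hF : ∀ i ∈ F, d i = 1),
      p (D.sign d) (sign_mem_fixing hS hF))
    (mul : ∀ g h hg hh, p g hg → p h hh → p (g * h) (mul_mem hg hh))
    {g : Γ} (hg : g ∈ D.fixing F S) : p g hg := by
  have p_one : p 1 (one_mem _) := by
    simpa using perm 1 (fun _ _ => rfl) (fun _ _ => rfl)
  unfold fixing at hg
  induction hg using Subgroup.closure_induction'' with
  | one => exact p_one
  | mul g h hg hh hpg hph => exact mul g h hg hh hpg hph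
  | mem g hg =>
    rcases hg with (⟨i, hi, j, hj, hij, hjF, rfl⟩ | ⟨σ, hS, hF, rfl⟩) | ⟨d, hS, hF, rfl⟩
    exacts [x i j hi hj hij hjF, perm σ hS hF, sign d hS hF]
  | inv_mem g hg =>
    rcases hg with (⟨i, hi, j, hj, hij, hjF, rfl⟩ | ⟨σ, hS, hF, rfl⟩) | ⟨d, hS, hF, rfl⟩
    · have hsign := sign (Pi.mulSingle j (-1)) (mulSingle_apply_of_notMem hj _)
        (fun m hm => Pi.mulSingle_eq_of_ne (ne_of_mem_of_not_mem hm hjF) _)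
      simpa only [x_inv hij] using
        mul _ _ _ _ (mul _ _ _ _ hsign (x i j hi hj hij hjF)) hsign
    · simpa only [← map_inv] using perm σ⁻¹ (symm_apply_eq_of_forall_notMem hS)
        (fun i hi => σ.symm_apply_eq.2 (hF i hi).symm)
    · simpa only [sign_inv] using sign d hS hF

lemma x_mul_x_swap (hij : i ≠ j) (hjk : j ≠ k) (hik : i ≠ k) :
    D.x j k * D.x i j = D.x i j * (D.x i k)⁻¹ * D.x j k := by
  have h := D.x_commute_x hij hik hij.symm hik
  rw [h.inv_right.eq, mul_assoc, D.x_mul_x hij hjk hik,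
    (D.x_commute_x hjk hik hik.symm hjk).eq, mul_assoc, inv_mul_cancel_left]

lemma x_inv_mul_x_left (hij : i ≠ j) (hjk : j ≠ k) (hik : i ≠ k) :
    (D.x i j)⁻¹ * D.x j k = D.x j k * (D.x i k)⁻¹ * (D.x i j)⁻¹ := by
  rw [inv_mul_eq_iff_eq_mul, ← mul_assoc, eq_mul_inv_iff_mul_eq, ← mul_assoc, eq_mul_inv_iff_mul_eq,
    D.x_mul_x hij hjk hik, mul_assoc, (D.x_commute_x hij hik hij.symm hik).eq, mul_assoc]

lemma x_inv_mul_x_right (hij : i ≠ j) (hjk : j ≠ k) (hik : i ≠ k) :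
    (D.x j k)⁻¹ * D.x i j = D.x i j * D.x i k * (D.x j k)⁻¹ := by
  rw [inv_mul_eq_iff_eq_mul, ← mul_assoc, eq_mul_inv_iff_mul_eq, D.x_mul_x hij hjk hik, mul_assoc,
    (D.x_commute_x hij hik hij.symm hik).eq]

lemma x_inv_mul_x_swap_mul_x_inv (hij : i ≠ j) :
    (D.x i j)⁻¹ * D.x j i * (D.x i j)⁻¹ =
      D.perm (Equiv.swap i j) * D.sign (Pi.mulSingle j (-1)) := by
  rw [D.x_eq_mul_swap hij]; group

lemma sign_mul_x_inv (hij : i ≠ j) :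
    D.sign (Pi.mulSingle i (-1)) * (D.x i j)⁻¹ =
      D.x j i * D.perm (Equiv.swap i j) * (D.x j i)⁻¹ := by
  have hperm : D.perm (Equiv.swap j i) * D.perm (Equiv.swap j i) = 1 := by
    rw [← map_mul, Equiv.swap_mul_self, map_one]
  have hsign : D.sign (Pi.mulSingle i (-1)) * D.x j i =
      (D.x j i)⁻¹ * D.sign (Pi.mulSingle i (-1)) := by
    simp [D.sign_mul_x _ hij.symm, hij]
  rw [mul_inv_eq_iff_eq_mul, D.x_eq_mul_swap hij.symm, Equiv.swap_comm i j]
  simp only [mul_assoc, inv_mul_cancel_left, hsign]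
  rw [← mul_assoc (D.perm _), hperm, one_mul, mul_inv_cancel_left]

lemma x_mul_perm (σ : Equiv.Perm ι) (hij : i ≠ j) :
    D.x i j * D.perm σ = D.perm σ * D.x (σ.symm i) (σ.symm j) := by
  rw [D.perm_mul_x σ (by simpa using hij)]
  simp

lemma sign_mul_perm (σ : Equiv.Perm ι) (d : ι → ℤˣ) :
    D.sign d * D.perm σ = D.perm σ * D.sign (d ∘ σ) := by
  rw [D.perm_mul_sign]
  simp [comp_assoc]

variable (D s S) in
/-- `D.Reduces s S v q`: the nonnegative vector `v` can be reduced to a basis vector by subtracting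
from coordinates in `S` other such coordinates, and undoing the subtractions by elements `x i j`
takes the `s`-th basis vector to `v` through the coset `q` of the stabilizer. -/
inductive Reduces : (ι → ℕ) → Γ ⧸ D.fixing {s} S → Prop
  | base (σ : Equiv.Perm ι) (hσ : ∀ i ∉ S, σ i = i) :
      Reduces (Pi.single (σ s) 1) (D.perm σ : Γ ⧸ D.fixing {s} S)
  | step {v : ι → ℕ} {q : Γ ⧸ D.fixing {s} S} {i j : ι} (hi : i ∈ S) (hj : j ∈ S) (hij : i ≠ j)
      (hpos : 0 < v j) (hle : v j ≤ v i) (hr : Reduces (update v i (v i - v j)) q) :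
      Reduces v (D.x i j • q)

variable {q : Γ ⧸ D.fixing {s} S}

lemma smul_mk_eq_of_mul_eq {H : Subgroup Γ} {g a h : Γ} (hh : h ∈ H) (heq : g * a = a * h) :
    g • (a : Γ ⧸ H) = a := by
  rw [MulAction.Quotient.smul_coe, smul_eq_mul, heq]
  exact QuotientGroup.mk_mul_of_mem _ hh

namespace Reduces

lemma congr (h : D.Reduces s S v q) {w : ι → ℕ} (hvw : ∀ m, v m = w m) : D.Reduces s S w q :=
  funext hvw ▸ h

lemma x_smul (h : D.Reduces s S v q) (hi : i ∈ S) (hj : j ∈ S) (hij : i ≠ j) (hv : v j = 0) :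
    D.x i j • q = q := by
  induction h generalizing i j with
  | base σ hσ =>
    have hσ' := symm_apply_eq_of_forall_notMem hσ
    refine smul_mk_eq_of_mul_eq (x_mem_fixing ((apply_mem_iff_of_forall_notMem hσ').2 hi)
      ((apply_mem_iff_of_forall_notMem hσ').2 hj) (by simpa using hij) ?_) (x_mul_perm σ hij)
    rintro rfl
    simp at hv
  | @step v q k l hk _ hkl hpos hle _ ih =>
    have hjk : j ≠ k := by rintro rfl; omega
    have hv' : update v k (v k - v l) j = 0 := by rw [update_of_ne hjk, hv]
    rcases eq_or_ne l i with rfl | hli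
    · have hx := ih hk hj hjk.symm hv'
      rw [smul_smul, x_mul_x_swap hkl hij hjk.symm, mul_smul, mul_smul, ih hi hj hij hv',
        inv_smul_eq_iff.2 hx.symm]
    · rw [smul_smul, (D.x_commute_x hij hkl hjk hli.symm).eq, mul_smul, ih hi hj hij hv']

lemma x_inv_smul (h : D.Reduces s S v q) (hi : i ∈ S) (hj : j ∈ S) (hij : i ≠ j) (hv : v j = 0) :
    (D.x i j)⁻¹ • q = q :=
  inv_smul_eq_iff.2 (h.x_smul hi hj hij hv).symm

lemma sign_smul (h : D.Reduces s S v q) {d : ι → ℤˣ} (hd : ∀ i ∉ S, d i = 1)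
    (hdv : ∀ i, v i ≠ 0 → d i = 1) : D.sign d • q = q := by
  induction h with
  | base σ hσ =>
    refine smul_mk_eq_of_mul_eq (sign_mem_fixing (fun i hi => ?_) ?_) (sign_mul_perm σ d)
    · exact hd _ (by rwa [apply_mem_iff_of_forall_notMem hσ])
    · simpa using hdv (σ s)
  | @step v q k l _ _ hkl hpos hle _ ih =>
    have hdk := hdv k (by omega)
    have hdl := hdv l (by omega)
    rw [smul_smul, D.sign_mul_x d hkl, hdk, hdl, mul_smul, ih fun i hi => ?_]
    · simp
    · rcases eq_or_ne i k with rfl | hik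
      · exact hdk
      · exact hdv i (by simpa [update_of_ne hik] using hi)

lemma perm_smul (h : D.Reduces s S v q) {τ : Equiv.Perm ι} (hτ : ∀ i ∉ S, τ i = i) :
    D.Reduces s S (v ∘ τ.symm) (D.perm τ • q) := by
  induction h with
  | base σ hσ =>
    rw [MulAction.Quotient.smul_coe, smul_eq_mul, ← map_mul]
    convert Reduces.base (D := D) (S := S) (s := s) (τ * σ) (fun i hi => ?_) using 1
    · ext m
      simp [Pi.single_apply, Equiv.symm_apply_eq]
    · rw [Equiv.Perm.mul_apply, hσ i hi, hτ i hi]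
  | @step v q k l hk hl hkl hpos hle _ ih =>
    rw [smul_smul, D.perm_mul_x τ hkl, mul_smul]
    refine step ((apply_mem_iff_of_forall_notMem hτ).2 hk)
      ((apply_mem_iff_of_forall_notMem hτ).2 hl) (by simpa using hkl) (by simpa using hpos)
      (by simpa using hle) ?_
    convert ih using 1
    ext m
    simp [update_apply, Equiv.symm_apply_eq]

lemma add (h : D.Reduces s S v q) (hi : i ∈ S) (hj : j ∈ S) (hij : i ≠ j) :
    D.Reduces s S (update v i (v i + v j)) (D.x i j • q) := by
  rcases Nat.eq_zero_or_pos (v j) with hv | hpos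
  · rw [h.x_smul hi hj hij hv]
    exact h.congr (by grind [update_apply])
  · exact .step hi hj hij (by grind [update_apply]) (by grind [update_apply])
      (h.congr (by grind [update_apply]))

lemma sub_of_eq (hi : i ∈ S) (hj : j ∈ S) (hij : i ≠ j) (hv : v i = v j)
    (hr : D.Reduces s S (update v j (v j - v i)) q) :
    D.Reduces s S (update v i (v i - v j)) ((D.x i j)⁻¹ • D.x j i • q) := by
  have hx : (D.x i j)⁻¹ • q = q := hr.x_inv_smul hi hj hij (by simp [hv])
  have hsign : D.sign (Pi.mulSingle j (-1)) • q = q :=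
    hr.sign_smul (mulSingle_apply_of_notMem hj _)
      (fun m hm => Pi.mulSingle_eq_of_ne (by rintro rfl; simp [hv] at hm) _)
  have hq : (D.x i j)⁻¹ • D.x j i • q = D.perm (Equiv.swap i j) • q := by
    conv_lhs => rw [← hx]
    rw [smul_smul, smul_smul, x_inv_mul_x_swap_mul_x_inv hij, mul_smul, hsign]
  rw [hq]
  refine (hr.perm_smul (swap_apply_of_notMem hi hj)).congr fun m => ?_
  simp only [update_apply, Function.comp_apply, Equiv.symm_swap, Equiv.swap_apply_def]
  grind

end Reduces

section Confluence

variable [Fintype ι]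

variable (D s S) in
/-- `Reduces` is stable under subtracting one coordinate from another for vectors of sum less than
`N`. This is the induction hypothesis in the proof of confluence. -/
def StableUnderSubBelow (N : ℕ) : Prop :=
  ∀ ⦃v : ι → ℕ⦄ ⦃q⦄, D.Reduces s S v q → ∑ m, v m < N → ∀ ⦃i j⦄, i ∈ S → j ∈ S → i ≠ j →
    0 < v j → v j ≤ v i → D.Reduces s S (update v i (v i - v j)) ((D.x i j)⁻¹ • q)

namespace StableUnderSubBelow

lemma sub_of_commute (ih : D.StableUnderSubBelow s S (∑ m, v m)) (hi : i ∈ S) (hj : j ∈ S)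
    (hij : i ≠ j) (hk : k ∈ S) (hl : l ∈ S) (hkl : k ≠ l) (hjk : j ≠ k) (hil : i ≠ l)
    (hposj : 0 < v j) (hposl : 0 < v l) (hji : v j ≤ v i) (hlk : v l ≤ v k)
    (hik : i = k → v j + v l ≤ v i) (hr : D.Reduces s S (update v k (v k - v l)) q) :
    D.Reduces s S (update v i (v i - v j)) ((D.x i j)⁻¹ • D.x k l • q) := by
  have hr' := ih hr (sum_update_sub_lt hposl hlk) hi hj hij (by grind [update_apply])
    (by grind [update_apply])
  have hq : (D.x i j)⁻¹ • D.x k l • q = D.x k l • (D.x i j)⁻¹ • q := by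
    rw [smul_smul, smul_smul, (D.x_commute_x hij hkl hjk hil).inv_left.eq]
  rw [hq]
  exact .step hk hl hkl (by grind [update_apply]) (by grind [update_apply])
    (hr'.congr (by grind [update_apply]))

lemma sub_of_step_left (ih : D.StableUnderSubBelow s S (∑ m, v m)) (hi : i ∈ S) (hj : j ∈ S)
    (hij : i ≠ j) (hl : l ∈ S) (hjl : j ≠ l) (hil : i ≠ l) (hposl : 0 < v l) (hji : v j ≤ v i)
    (hlj : v l ≤ v j) (hr : D.Reduces s S (update v j (v j - v l)) q) :
    D.Reduces s S (update v i (v i - v j)) ((D.x i j)⁻¹ • D.x j l • q) := by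
  have hrj : D.Reduces s S (update (update v j (v j - v l)) i (v i - (v j - v l)))
      ((D.x i j)⁻¹ • q) := by
    rcases hlj.eq_or_lt with h | h
    · rw [hr.x_inv_smul hi hj hij (by simp [h])]
      exact hr.congr (by grind [update_apply])
    · exact (ih hr (sum_update_sub_lt hposl hlj) hi hj hij (by grind [update_apply])
        (by grind [update_apply])).congr (by grind [update_apply])
  have hlt : ∑ m, update (update v j (v j - v l)) i (v i - (v j - v l)) m < ∑ m, v m :=
    Finset.sum_lt_sum (fun m _ => by grind [update_apply])
      ⟨j, Finset.mem_univ _, by grind [update_apply]⟩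
  have hrl := ih hrj hlt hi hl hil (by grind [update_apply]) (by grind [update_apply])
  have hq : (D.x i j)⁻¹ • D.x j l • q = D.x j l • (D.x i l)⁻¹ • (D.x i j)⁻¹ • q := by
    simp only [smul_smul, ← mul_assoc, x_inv_mul_x_left hij hjl hil]
  rw [hq]
  exact .step hj hl hjl (by grind [update_apply]) (by grind [update_apply])
    (hrl.congr (by grind [update_apply]))

lemma sub_of_step_right (ih : D.StableUnderSubBelow s S (∑ m, v m)) (hi : i ∈ S) (hj : j ∈ S)
    (hij : i ≠ j) (hk : k ∈ S) (hki : k ≠ i) (hkj : k ≠ j) (hposj : 0 < v j) (hji : v j ≤ v i)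
    (hik : v i ≤ v k) (hr : D.Reduces s S (update v k (v k - v i)) q) :
    D.Reduces s S (update v i (v i - v j)) ((D.x i j)⁻¹ • D.x k i • q) := by
  have hri := ih hr (sum_update_sub_lt (by omega) hik) hi hj hij (by grind [update_apply])
    (by grind [update_apply])
  have hrk : D.Reduces s S (update (update v i (v i - v j)) k (v k - (v i - v j)))
      (D.x k j • (D.x i j)⁻¹ • q) :=
    .step hk hj hkj (by grind [update_apply]) (by grind [update_apply])
      (hri.congr (by grind [update_apply]))
  have hq : (D.x i j)⁻¹ • D.x k i • q = D.x k i • D.x k j • (D.x i j)⁻¹ • q := by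
    simp only [smul_smul, ← mul_assoc, x_inv_mul_x_right hki hij hkj]
  rw [hq]
  rcases hji.eq_or_lt with h | h
  · rw [hrk.x_smul hk hi hki (by grind [update_apply])]
    exact hrk.congr (by grind [update_apply])
  · exact .step hk hi hki (by grind [update_apply]) (by grind [update_apply])
      (hrk.congr (by grind [update_apply]))

/-- When the two subtractions from `v i` cannot both be carried out, the smaller one is carried out
first and then subtracted from the larger one. -/
lemma sub_of_step_same (ih : D.StableUnderSubBelow s S (∑ m, v m)) (hi : i ∈ S) (hj : j ∈ S)
    (hij : i ≠ j) (hl : l ∈ S) (hil : i ≠ l) (hposj : 0 < v j) (hposl : 0 < v l)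
    (hji : v j ≤ v i) (hli : v l ≤ v i) (hr : D.Reduces s S (update v i (v i - v l)) q) :
    D.Reduces s S (update v i (v i - v j)) ((D.x i j)⁻¹ • D.x i l • q) := by
  rcases eq_or_ne j l with rfl | hjl
  · rwa [inv_smul_smul]
  rcases le_or_gt (v j + v l) (v i) with hle | -
  · exact ih.sub_of_commute hi hj hij hi hl hil hij.symm hil hposj hposl hji hli (fun _ => hle) hr
  rcases le_total (v l) (v j) with hlj | hjl'
  · have hrj := ih.sub_of_commute hj hl hjl hi hl hil hil.symm hjl hposl hposl hlj hli
      (fun h => absurd h.symm hij) hr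
    simpa using ih.sub_of_step_left hi hj hij hl hjl hil hposl hji hlj hrj
  · have hrl := ih.sub_of_step_right hl hj hjl.symm hi hil hij hposj hjl' hli hr
    simpa using ih.sub_of_commute hi hj hij hl hj hjl.symm hjl hij hposj hposj hji hjl'
      (fun h => absurd h hil) hrl

end StableUnderSubBelow

theorem stableUnderSubBelow (N : ℕ) : D.StableUnderSubBelow s S N := by
  induction N with
  | zero => intro v q _ hv; omega
  | succ N ih =>
    intro v q hv hsum i j hi hj hij hposj hji
    replace ih : D.StableUnderSubBelow s S (∑ m, v m) := fun w q hw hlt => ih hw (by omega)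
    cases hv with
    | base σ _ => grind
    | @step _ q k l hk hl hkl hposl hlk hr =>
      rcases eq_or_ne i l with rfl | hil <;> rcases eq_or_ne j k with rfl | hjk
      · exact .sub_of_eq hi hj hij (le_antisymm hlk hji) hr
      · exact ih.sub_of_step_right hi hj hij hk hkl hjk.symm hposj hji hlk hr
      · exact ih.sub_of_step_left hi hj hij hl hkl hil hposl hji hlk hr
      rcases eq_or_ne i k with rfl | hik
      · exact ih.sub_of_step_same hi hj hij hl hil hposj hposl hji hlk hr
      · exact ih.sub_of_commute hi hj hij hk hl hkl hjk hil hposj hposl hji hlk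
          (fun h => absurd h hik) hr

end Confluence

namespace Reduces

variable [Finite ι]

lemma sub (h : D.Reduces s S v q) (hi : i ∈ S) (hj : j ∈ S) (hij : i ≠ j) (hji : v j ≤ v i) :
    D.Reduces s S (update v i (v i - v j)) ((D.x i j)⁻¹ • q) := by
  cases nonempty_fintype ι
  rcases Nat.eq_zero_or_pos (v j) with hv | hpos
  · rw [h.x_inv_smul hi hj hij hv]
    exact h.congr (by grind [update_apply])
  · exact stableUnderSubBelow _ h (Nat.lt_succ_self _) hi hj hij hpos hji

lemma sub_of_lt (h : D.Reduces s S v q) (hi : i ∈ S) (hj : j ∈ S) (hij : i ≠ j) (hlt : v i < v j) :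
    D.Reduces s S (update v i (v j - v i))
      (D.sign (Pi.mulSingle i (-1)) • (D.x i j)⁻¹ • q) := by
  have hq : D.sign (Pi.mulSingle i (-1)) • (D.x i j)⁻¹ • q =
      D.x j i • D.perm (Equiv.swap i j) • (D.x j i)⁻¹ • q := by
    simp only [smul_smul, ← mul_assoc, sign_mul_x_inv hij]
  rw [hq]
  refine (((h.sub hj hi hij.symm hlt.le).perm_smul (swap_apply_of_notMem hi hj)).add
    hj hi hij.symm).congr fun m => ?_
  simp only [update_apply, Function.comp_apply, Equiv.symm_swap, Equiv.swap_apply_def]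
  grind

end Reduces

variable (D s S) in
/-- The extension of `Reduces` to integer vectors by means of sign changes. -/
def SignedReduces (v : ι → ℤ) (q : Γ ⧸ D.fixing {s} S) : Prop :=
  ∃ (d : ι → ℤˣ) (u : ι → ℕ) (r : Γ ⧸ D.fixing {s} S), (∀ i ∉ S, d i = 1) ∧ D.Reduces s S u r ∧
    v = (fun i => (d i : ℤ) * u i) ∧ q = D.sign d • r

lemma Reduces.signedReduces (h : D.Reduces s S v q) :
    D.SignedReduces s S (fun m => (v m : ℤ)) q :=
  ⟨1, v, q, fun _ _ => rfl, h, by simp, by simp⟩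

lemma Reduces.eq_one_of_single (h : D.Reduces s S (Pi.single s 1) q) :
    q = ((1 : Γ) : Γ ⧸ D.fixing {s} S) := by
  generalize hv : (Pi.single s 1 : ι → ℕ) = v at h
  cases h with
  | base σ hσ =>
    have hs : σ s = s := by
      by_contra hne
      simpa [Ne.symm hne] using congrFun hv s
    rw [QuotientGroup.eq, mul_one, inv_mem_iff]
    exact perm_mem_fixing hσ (by simpa using hs)
  | step _ _ hij hpos hle _ =>
    subst hv
    grind

lemma SignedReduces.eq_one_of_single (h : D.SignedReduces s S (Pi.single s 1) q) :
    q = ((1 : Γ) : Γ ⧸ D.fixing {s} S) := by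
  obtain ⟨d, u, r, hd, hu, hv, rfl⟩ := h
  have hus : u = Pi.single s 1 := by
    ext m
    have hm := congrArg Int.natAbs (congrFun hv m)
    simp only [Int.natAbs_mul, Int.units_natAbs, Int.natAbs_natCast, one_mul] at hm
    rw [← hm]
    rcases eq_or_ne m s with rfl | hms <;> simp [*]
  have hds : d s = 1 := by
    have hs := congrFun hv s
    simp only [hus, Pi.single_eq_same] at hs
    ext
    simpa using hs.symm
  subst hus
  rw [hu.sign_smul hd (fun m hm => ?_), hu.eq_one_of_single]
  rcases eq_or_ne m s with rfl | hms
  · exact hds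
  · simp [hms] at hm

lemma rep_x_inv (hij : i ≠ j) (v : ι → ℤ) : D.rep (D.x i j)⁻¹ v = update v i (v i - v j) := by
  have h : D.rep (D.x i j) (update v i (v i - v j)) = v := by
    simp [D.rep_x hij, hij.symm]
  conv_lhs => rw [← h]
  rw [← Module.End.mul_apply, ← map_mul, inv_mul_cancel, map_one, Module.End.one_apply]

lemma rep_x_zpow (hij : i ≠ j) (a : ℤ) (v : ι → ℤ) :
    D.rep (D.x i j ^ a) v = update v i (v i + a * v j) := by
  induction a generalizing v with
  | zero => simp
  | succ n ih =>
    rw [_root_.zpow_add_one, map_mul, Module.End.mul_apply, D.rep_x hij, ih]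
    simp only [update_self, update_of_ne hij.symm, update_idem]
    congr 1
    ring
  | pred n ih =>
    rw [_root_.zpow_sub_one, map_mul, Module.End.mul_apply, rep_x_inv hij, ih]
    simp only [update_self, update_of_ne hij.symm, update_idem]
    congr 1
    ring

lemma rep_apply_of_notMem {g : Γ} (hg : g ∈ D.fixing F S) (hs : s ∉ S) (v : ι → ℤ) :
    D.rep g v s = v s := by
  induction hg using fixing_induction generalizing v with
  | x i j hi _ hij _ => rw [D.rep_x hij, update_of_ne (ne_of_mem_of_not_mem hi hs).symm]
  | perm σ hσ _ =>
    rw [D.rep_perm, Function.comp_apply, symm_apply_eq_of_forall_notMem hσ s hs]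
  | sign d hd _ => simp [D.rep_sign, hd s hs]
  | mul g h _ _ hg hh => rw [map_mul, Module.End.mul_apply, hg, hh]

lemma SignedReduces.sign_smul {v : ι → ℤ} (h : D.SignedReduces s S v q) {d : ι → ℤˣ}
    (hd : ∀ i ∉ S, d i = 1) : D.SignedReduces s S (D.rep (D.sign d) v) (D.sign d • q) := by
  obtain ⟨d', u, r, hd', hu, rfl, rfl⟩ := h
  refine ⟨d * d', u, r, fun i hi => by simp [hd i hi, hd' i hi], hu, ?_, ?_⟩
  · ext i
    simp [D.rep_sign, mul_assoc]
  · rw [smul_smul, map_mul]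

lemma SignedReduces.perm_smul {v : ι → ℤ} (h : D.SignedReduces s S v q) {σ : Equiv.Perm ι}
    (hσ : ∀ i ∉ S, σ i = i) : D.SignedReduces s S (D.rep (D.perm σ) v) (D.perm σ • q) := by
  obtain ⟨d, u, r, hd, hu, rfl, rfl⟩ := h
  refine ⟨d ∘ σ.symm, u ∘ σ.symm, D.perm σ • r, fun i hi => ?_, hu.perm_smul hσ, ?_, ?_⟩
  · rw [Function.comp_apply, symm_apply_eq_of_forall_notMem hσ i hi, hd i hi]
  · ext i
    simp [D.rep_perm]
  · rw [smul_smul, smul_smul, D.perm_mul_sign]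

lemma fixing_empty_right : D.fixing F ∅ = ⊥ := by
  refine (Subgroup.eq_bot_iff_forall _).2 fun g hg => ?_
  induction hg using fixing_induction with
  | x i j hi _ _ _ => exact absurd hi (Set.notMem_empty i)
  | perm σ hσ _ => rw [show σ = 1 from Equiv.ext fun i => hσ i (Set.notMem_empty i), map_one]
  | sign d hd _ => rw [show d = 1 from funext fun i => hd i (Set.notMem_empty i), map_one]
  | mul g h _ _ hg hh => rw [hg, hh, one_mul]

lemma pairwise_commute_row :
    Pairwise fun j k : {j // j ≠ s} => ∀ a b : Multiplicative ℤ,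
      Commute (zpowersHom Γ (D.x s j) a) (zpowersHom Γ (D.x s k) b) :=
  fun j k _ a b =>
    (D.x_commute_x j.2.symm k.2.symm j.2 k.2.symm).zpow_zpow a.toAdd b.toAdd

section Finite

variable [Finite ι]

lemma Reduces.signedReduces_x_smul (h : D.Reduces s S v q) (hi : i ∈ S) (hj : j ∈ S)
    (hij : i ≠ j) (t : ℤˣ) :
    D.SignedReduces s S (D.rep (D.x i j ^ (t : ℤ)) (fun m => (v m : ℤ)))
      (D.x i j ^ (t : ℤ) • q) := by
  rw [rep_x_zpow hij]
  rcases Int.units_eq_one_or t with rfl | rfl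
  · rw [Units.val_one, zpow_one]
    convert (h.add hi hj hij).signedReduces using 1
    ext m
    grind [update_apply]
  rw [Units.val_neg, Units.val_one, _root_.zpow_neg_one]
  rcases le_or_gt (v j) (v i) with hle | hlt
  · convert (h.sub hi hj hij hle).signedReduces using 1
    ext m
    grind [update_apply]
  · refine ⟨Pi.mulSingle i (-1), _, _, mulSingle_apply_of_notMem hi _,
      h.sub_of_lt hi hj hij hlt, ?_, ?_⟩
    · ext m
      simp only [update_apply, Pi.mulSingle_apply]
      split_ifs <;> simp [hlt.le, sub_eq_add_neg]
    · rw [smul_smul, sign_mul_self, one_smul]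

lemma SignedReduces.x_smul {v : ι → ℤ} (h : D.SignedReduces s S v q) (hi : i ∈ S) (hj : j ∈ S)
    (hij : i ≠ j) : D.SignedReduces s S (D.rep (D.x i j) v) (D.x i j • q) := by
  obtain ⟨d, u, r, hd, hu, rfl, rfl⟩ := h
  have hconj : D.sign d * D.x i j ^ ((d i * d j : ℤˣ) : ℤ) = D.x i j * D.sign d := by
    rw [← sign_mul_x_mul_sign d hij]
    simp only [← mul_assoc, sign_mul_self, one_mul]
  have hx := (hu.signedReduces_x_smul hi hj hij (d i * d j)).sign_smul hd
  rw [smul_smul, ← Module.End.mul_apply, ← map_mul, hconj, mul_smul, map_mul,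
    Module.End.mul_apply, D.rep_sign] at hx
  exact hx

theorem SignedReduces.smul {v : ι → ℤ} {g : Γ} (hg : g ∈ D.fixing ∅ S)
    (h : D.SignedReduces s S v q) : D.SignedReduces s S (D.rep g v) (g • q) := by
  induction hg using fixing_induction generalizing v q with
  | x i j hi hj hij _ => exact h.x_smul hi hj hij
  | perm σ hσ _ => exact h.perm_smul hσ
  | sign d hd _ => exact h.sign_smul hd
  | mul g g' _ _ hg hg' =>
    rw [map_mul, Module.End.mul_apply, mul_smul]
    exact hg (hg' h)

theorem mem_fixing_of_rep_single {g : Γ} (hg : g ∈ D.fixing ∅ S)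
    (h : D.rep g (Pi.single s 1) = Pi.single s 1) : g ∈ D.fixing {s} S := by
  have h_one : D.SignedReduces s S (Pi.single s 1) ((1 : Γ) : Γ ⧸ D.fixing {s} S) := by
    convert (Reduces.base (D := D) (s := s) (S := S) 1 (fun _ _ => rfl)).signedReduces using 1
    · ext m
      rcases eq_or_ne m s with rfl | hms <;> simp [*]
    · rw [map_one]
  have hg_one := h_one.smul hg
  rw [h, MulAction.Quotient.smul_coe, smul_eq_mul, mul_one] at hg_one
  simpa [QuotientGroup.eq] using hg_one.eq_one_of_single

end Finite

section RowHom

variable [Fintype ι]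

variable (D s) in
/-- The homomorphism sending `a` to the product of the commuting elements `x s j ^ a j`, which act
on `ι → ℤ` by adding multiples of the other coordinates to the `s`-th one. -/
noncomputable def rowHom : ({j // j ≠ s} → Multiplicative ℤ) →* Γ :=
  MonoidHom.noncommPiCoprod (fun j => zpowersHom Γ (D.x s j)) pairwise_commute_row

lemma rowHom_mulSingle (j : {j // j ≠ s}) (a : Multiplicative ℤ) :
    D.rowHom s (Pi.mulSingle j a) = D.x s j ^ a.toAdd := by
  rw [rowHom, MonoidHom.noncommPiCoprod_mulSingle, zpowersHom_apply]

lemma x_mem_range_rowHom (hj : j ≠ s) : D.x s j ∈ (D.rowHom s).range :=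
  ⟨Pi.mulSingle ⟨j, hj⟩ (Multiplicative.ofAdd 1), by simp [rowHom_mulSingle]⟩

lemma rep_rowHom (a : {j // j ≠ s} → Multiplicative ℤ) (v : ι → ℤ) :
    D.rep (D.rowHom s a) v = update v s (v s + ∑ j, (a j).toAdd * v j) := by
  induction a using Pi.mulSingle_induction generalizing v with
  | one => simp
  | mul a b ha hb =>
    rw [map_mul, map_mul, Module.End.mul_apply, hb, ha, update_idem, update_self]
    have hne (c : ℤ) (j : {j // j ≠ s}) : update v s c j = v j := update_of_ne j.2 _ _
    simp only [hne, Pi.mul_apply, toAdd_mul, add_mul,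
      Finset.sum_add_distrib]
    congr 1
    ring
  | mulSingle k b =>
    rw [rowHom_mulSingle, rep_x_zpow k.2.symm, Finset.sum_eq_single k, Pi.mulSingle_eq_same]
    · intro j _ hj
      simp [hj]
    · simp

lemma eq_one_of_rep_rowHom_eq_one {a : {j // j ≠ s} → Multiplicative ℤ}
    (h : D.rep (D.rowHom s a) = 1) : a = 1 := by
  ext j
  have hj := congrFun (rep_rowHom (D := D) a (Pi.single (j : ι) 1)) s
  rw [h, Module.End.one_apply, update_self, Finset.sum_eq_single j, Pi.single_eq_same,
    mul_one, left_eq_add] at hj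
  · exact hj
  · intro k _ hk
    simp [Subtype.coe_injective.ne hk]
  · simp

lemma conj_mem_range_rowHom_of_forall_x {g : Γ}
    (hg : ∀ j, j ≠ s → g * D.x s j * g⁻¹ ∈ (D.rowHom s).range) {u : Γ}
    (hu : u ∈ (D.rowHom s).range) : g * u * g⁻¹ ∈ (D.rowHom s).range := by
  obtain ⟨a, rfl⟩ := hu
  induction a using Pi.mulSingle_induction with
  | one => simp
  | mul a b ha hb =>
    rw [map_mul, ← conj_mul]
    exact mul_mem ha hb
  | mulSingle k b =>
    rw [rowHom_mulSingle, ← conj_zpow]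
    exact zpow_mem (hg k k.2) _

lemma x_conj_mem_range_rowHom (hij : i ≠ j) (his : i ≠ s) (hjs : j ≠ s) (hks : k ≠ s) :
    D.x i j * D.x s k * (D.x i j)⁻¹ ∈ (D.rowHom s).range := by
  rcases eq_or_ne i k with rfl | hik
  · rw [x_mul_x_swap his.symm hij hjs.symm, mul_inv_cancel_right]
    exact mul_mem (x_mem_range_rowHom his) (inv_mem (x_mem_range_rowHom hjs))
  · rw [(D.x_commute_x hij hks.symm hjs hik).eq, mul_inv_cancel_right]
    exact x_mem_range_rowHom hks

lemma conj_mem_range_rowHom (hs : s ∉ S) {g u : Γ} (hg : g ∈ D.fixing F S)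
    (hu : u ∈ (D.rowHom s).range) : g * u * g⁻¹ ∈ (D.rowHom s).range := by
  induction hg using fixing_induction generalizing u with
  | x i j hi hj hij _ =>
    exact conj_mem_range_rowHom_of_forall_x (fun k hks => x_conj_mem_range_rowHom hij
      (ne_of_mem_of_not_mem hi hs) (ne_of_mem_of_not_mem hj hs) hks) hu
  | perm σ hσ _ =>
    refine conj_mem_range_rowHom_of_forall_x (fun k hks => ?_) hu
    rw [D.perm_mul_x σ hks.symm, mul_inv_cancel_right, hσ s hs]
    exact x_mem_range_rowHom (fun h => hks (σ.injective (h.trans (hσ s hs).symm)))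
  | sign d _ _ =>
    refine conj_mem_range_rowHom_of_forall_x (fun k hks => ?_) hu
    rw [D.sign_mul_x d hks.symm, mul_inv_cancel_right]
    exact zpow_mem (x_mem_range_rowHom hks) _
  | mul g h _ _ hg hh =>
    rw [show g * h * u * (g * h)⁻¹ = g * (h * u * h⁻¹) * g⁻¹ by group]
    exact hg (hh hu)

lemma exists_eq_mul_of_mem_fixing_insert (hs : s ∉ S) {g : Γ}
    (hg : g ∈ D.fixing {s} (insert s S)) :
    ∃ u ∈ (D.rowHom s).range, ∃ l ∈ D.fixing ∅ S, g = u * l := by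
  induction hg using fixing_induction with
  | x i j hi hj hij hjs =>
    rcases eq_or_ne i s with rfl | his
    · exact ⟨_, x_mem_range_rowHom hjs, 1, one_mem _, (mul_one _).symm⟩
    · exact ⟨1, one_mem _, _, x_mem_fixing (Set.mem_of_mem_insert_of_ne hi his)
        (Set.mem_of_mem_insert_of_ne hj hjs) hij (Set.notMem_empty _), (one_mul _).symm⟩
  | perm σ hσ hs =>
    exact ⟨1, one_mem _, _, perm_mem_fixing (forall_notMem_of_insert hσ (hs s rfl)) (by simp),
      (one_mul _).symm⟩
  | sign d hd hs =>
    exact ⟨1, one_mem _, _, sign_mem_fixing (forall_notMem_of_insert hd (hs s rfl)) (by simp),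
      (one_mul _).symm⟩
  | mul g h _ _ hg hh =>
    obtain ⟨u, hu, l, hl, rfl⟩ := hg
    obtain ⟨u', hu', l', hl', rfl⟩ := hh
    exact ⟨u * (l * u' * l⁻¹), mul_mem hu (conj_mem_range_rowHom hs hl hu'), l * l',
      mul_mem hl hl', by group⟩

end RowHom

/-- An element acting trivially fixes the basis vector of any index `s`, so it is the product of an
element in row `s` and an element not involving `s`; both factors again act trivially. -/
theorem eq_one_of_rep_eq_one [Finite ι] (T : Finset ι) {g : Γ}
    (hg : g ∈ D.fixing ∅ (T : Set ι)) (h : D.rep g = 1) : g = 1 := by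
  cases nonempty_fintype ι
  induction T using Finset.induction_on generalizing g with
  | empty => rwa [Finset.coe_empty, fixing_empty_right, Subgroup.mem_bot] at hg
  | insert s T hs ih =>
    rw [Finset.coe_insert] at hg
    have hs' : s ∉ (T : Set ι) := by simpa using hs
    obtain ⟨-, ⟨a, rfl⟩, l, hl, rfl⟩ :=
      exists_eq_mul_of_mem_fixing_insert hs' (mem_fixing_of_rep_single (s := s) hg (by simp [h]))
    rw [map_mul] at h
    have hrep : D.rep l = 1 := by
      refine LinearMap.ext fun v => funext fun m => ?_
      rcases eq_or_ne m s with rfl | hms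
      · exact rep_apply_of_notMem hl hs' v
      · have hm := congrFun (rep_rowHom (D := D) a (D.rep l v)) m
        rw [← Module.End.mul_apply, h, update_of_ne hms] at hm
        exact hm.symm
    rw [hrep, mul_one] at h
    rw [eq_one_of_rep_rowHom_eq_one h, map_one, ih hl hrep, one_mul]

end SteinbergData

end Steinberg

section NielsenReduced

open FreeGroup List

section CommonPrefix

variable {β : Type*} [DecidableEq β]

/-- The length of the longest common prefix of two lists. -/
def commonPrefixLength : List β → List β → ℕ
  | a :: l, b :: m => if a = b then commonPrefixLength l m + 1 else 0
  | _, _ => 0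

lemma commonPrefixLength_comm (l m : List β) :
    commonPrefixLength l m = commonPrefixLength m l := by
  induction l generalizing m with
  | nil => cases m <;> rfl
  | cons a l ih =>
    cases m with
    | nil => rfl
    | cons b m => simp only [commonPrefixLength, ih m, eq_comm]

lemma min_commonPrefixLength_le (l m k : List β) :
    min (commonPrefixLength l m) (commonPrefixLength m k) ≤ commonPrefixLength l k := by
  induction l generalizing m k with
  | nil => cases m <;> simp [commonPrefixLength]
  | cons a l ih =>
    rcases m with _ | ⟨b, m⟩
    · simp [commonPrefixLength]
    rcases k with _ | ⟨c, k⟩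
    · simp [commonPrefixLength]
    have := ih m k
    simp only [commonPrefixLength]
    split_ifs <;> simp_all

lemma exists_append_of_commonPrefixLength (l m : List β) :
    ∃ p a b, l = p ++ a ∧ m = p ++ b ∧ p.length = commonPrefixLength l m ∧
      ∀ y ∈ a.head?, ∀ z ∈ b.head?, y ≠ z := by
  induction l generalizing m with
  | nil => exact ⟨[], [], m, by simp [commonPrefixLength]⟩
  | cons c l ih =>
    cases m with
    | nil => exact ⟨[], c :: l, [], by simp [commonPrefixLength]⟩
    | cons e m =>
      rcases eq_or_ne c e with rfl | h
      · obtain ⟨p, a, b, hl, hm, hp, hab⟩ := ih m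
        exact ⟨c :: p, a, b, by simp [hl], by simp [hm], by simp [commonPrefixLength, hp], hab⟩
      · exact ⟨[], c :: l, e :: m, by simp [commonPrefixLength, h]⟩

end CommonPrefix

section WordCode

variable {α : Type*} [Fintype α]

/-- An injective numbering of the words of each given length. -/
noncomputable def wordCode (w : List (α × Bool)) : ℕ :=
  Nat.ofDigits (Fintype.card (α × Bool) + 2) (w.map fun a => (Fintype.equivFin (α × Bool) a : ℕ))

lemma wordCode_le_of_append {p q z z' : List (α × Bool)} (hpq : p.length = q.length) (hz : z = z')
    (h : wordCode (p ++ z) ≤ wordCode (q ++ z')) : wordCode p ≤ wordCode q := by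
  subst hz
  simpa [wordCode, Nat.ofDigits_append, hpq] using h

lemma eq_of_wordCode_eq {p q : List (α × Bool)} (hpq : p.length = q.length)
    (h : wordCode p = wordCode q) : p = q := by
  have hdigit (w : List (α × Bool)) : ∀ m ∈ w.map fun a => (Fintype.equivFin (α × Bool) a : ℕ),
      m < Fintype.card (α × Bool) + 2 := by
    simp only [mem_map]
    rintro _ ⟨a, -, rfl⟩
    omega
  refine map_injective_iff.2 (Fin.val_injective.comp (Fintype.equivFin (α × Bool)).injective) ?_
  exact Nat.ofDigits_inj_of_len_eq (by omega) (by simpa using hpq) (hdigit p) (hdigit q) h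

end WordCode

lemma isReduced_invRev {α : Type*} {L : List (α × Bool)} (h : IsReduced L) :
    IsReduced (invRev L) := by
  classical
  rw [isReduced_iff_reduce_eq, reduce_invRev, h.reduce_eq]

lemma isReduced_invRev_append {α : Type*} {a b : List (α × Bool)} (ha : IsReduced a)
    (hb : IsReduced b) (hab : ∀ y ∈ a.head?, ∀ z ∈ b.head?, y ≠ z) : IsReduced (invRev a ++ b) := by
  refine List.isChain_append.2 ⟨isReduced_invRev ha, hb, fun y hy z hz hyz => ?_⟩
  have hy' : (y.1, !y.2) ∈ a.head? := by
    cases a with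
    | nil => simp [invRev] at hy
    | cons c a =>
      simp only [invRev, map_cons, reverse_cons, getLast?_append, getLast?_singleton,
        Option.some_or, Option.mem_def, Option.some.injEq] at hy
      simp [← hy]
  have hne := hab _ hy' z hz
  contrapose! hne
  exact Prod.ext hyz (Bool.not_eq.2 hne)

variable {α : Type*} [DecidableEq α]

/-- The number of pairs of letters that cancel when the reduced words of `x` and `y` are
concatenated. -/
def cancelLength (x y : FreeGroup α) : ℕ :=
  commonPrefixLength x⁻¹.toWord y.toWord

lemma exists_toWord_mul (x y : FreeGroup α) :
    ∃ a p b, x.toWord = a ++ invRev p ∧ y.toWord = p ++ b ∧ (x * y).toWord = a ++ b ∧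
      p.length = cancelLength x y := by
  obtain ⟨p, a, b, hx, hy, hp, hab⟩ := exists_append_of_commonPrefixLength x⁻¹.toWord y.toWord
  have ha : IsReduced a := (isChain_append.1 (hx ▸ isReduced_toWord (x := x⁻¹))).2.1
  have hb : IsReduced b := (isChain_append.1 (hy ▸ isReduced_toWord (x := y))).2.1
  have hxw : x.toWord = invRev a ++ invRev p := by
    rw [← invRev_append, ← hx, toWord_inv, invRev_invRev]
  refine ⟨invRev a, p, b, hxw, hy, ?_, hp⟩
  have hmul : x * y = mk (invRev a ++ b) := by
    rw [← mk_toWord (x := x), ← mk_toWord (x := y), hxw, hy]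
    simp only [← mul_mk, ← inv_mk]
    group
  rw [hmul, toWord_mk, (isReduced_invRev_append ha hb hab).reduce_eq]

lemma norm_mul_add_cancelLength (x y : FreeGroup α) :
    norm (x * y) + 2 * cancelLength x y = norm x + norm y := by
  obtain ⟨a, p, b, hx, hy, hxy, hp⟩ := exists_toWord_mul x y
  rw [← hp, FreeGroup.norm, FreeGroup.norm, FreeGroup.norm, hx, hy, hxy]
  simp only [length_append, invRev_length]
  omega

lemma cancelLength_eq_of_lt {x y z : FreeGroup α} (h : cancelLength x y < cancelLength y⁻¹ z) :
    cancelLength x z = cancelLength x y := by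
  have hxz := min_commonPrefixLength_le x⁻¹.toWord y.toWord z.toWord
  have hxy := min_commonPrefixLength_le x⁻¹.toWord z.toWord y.toWord
  rw [commonPrefixLength_comm z.toWord] at hxy
  rw [cancelLength, cancelLength, inv_inv] at h
  rw [cancelLength, cancelLength]
  omega

lemma cancelLength_mul_eq {x y z : FreeGroup α}
    (h : cancelLength x y + cancelLength y z < norm y) :
    cancelLength x (y * z) = cancelLength x y := by
  refine cancelLength_eq_of_lt ?_
  have hyz := norm_mul_add_cancelLength y z
  have hz := norm_mul_add_cancelLength y⁻¹ (y * z)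
  rw [inv_mul_cancel_left, norm_inv_eq] at hz
  omega

lemma norm_lt_norm_mul_self {x : FreeGroup α} (hx : x ≠ 1) : norm x < norm (x * x) := by
  have hred := isReduced_toWord (x := x)
  have hword := FreeGroup.reduceCyclically.conj_conjugator_reduceCyclically x.toWord
  have hsq : (x * x).toWord = reduceCyclically.conjugator x.toWord ++
      (reduceCyclically x.toWord ++ reduceCyclically x.toWord) ++
        invRev (reduceCyclically.conjugator x.toWord) := by
    simpa [replicate_succ, ← toWord_mul] using
      reduceCyclically.reduce_flatten_replicate_succ hred 1
  have hne : reduceCyclically x.toWord ≠ [] := by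
    intro hnil
    rw [hnil, append_nil] at hword
    refine hx ?_
    rw [← mk_toWord (x := x), ← hword, ← mul_mk, ← inv_mk, mul_inv_cancel]
  have hlen := congrArg length hword
  have hpos := length_pos_iff.2 hne
  rw [FreeGroup.norm, FreeGroup.norm, hsq]
  simp only [length_append] at hlen ⊢
  omega

lemma two_mul_cancelLength_self_lt {x : FreeGroup α} (hx : x ≠ 1) :
    2 * cancelLength x x < norm x := by
  have hmul := norm_mul_add_cancelLength x x
  have hlt := norm_lt_norm_mul_self hx
  omega

/-- The value of a signed letter under an assignment `u` of the generators. -/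
def letter {β G : Type*} [Group G] (u : β → G) (a : β × Bool) : G :=
  cond a.2 (u a.1) (u a.1)⁻¹

lemma letter_not {β G : Type*} [Group G] (u : β → G) (a : β × Bool) :
    letter u (a.1, !a.2) = (letter u a)⁻¹ := by
  rcases a with ⟨i, _ | _⟩ <;> simp [letter]

lemma letter_ne_one {β G : Type*} [Group G] {u : β → G} (hu : ∀ i, u i ≠ 1) (a : β × Bool) :
    letter u a ≠ 1 := by
  rcases a with ⟨i, _ | _⟩ <;> simpa [letter] using hu i

variable {β : Type*}

/-- Nielsen's conditions on a tuple of elements of a free group. The condition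
`a.1 = b.1 → a.2 = b.2` says that the signed letters `a` and `b` are not inverse to each other. -/
structure IsNielsenReduced (u : β → FreeGroup α) : Prop where
  ne_one : ∀ i, u i ≠ 1
  two_mul_cancelLength_le : ∀ a b : β × Bool, (a.1 = b.1 → a.2 = b.2) →
    2 * cancelLength (letter u a) (letter u b) ≤ norm (letter u b)
  cancelLength_add_cancelLength_lt : ∀ a b c : β × Bool, (a.1 = b.1 → a.2 = b.2) →
    (b.1 = c.1 → b.2 = c.2) →
    cancelLength (letter u a) (letter u b) + cancelLength (letter u b) (letter u c) <
      norm (letter u b)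

namespace IsNielsenReduced

variable {u : β → FreeGroup α} (hu : IsNielsenReduced u)

include hu

lemma cancelLength_prod {W : List (β × Bool)} {b : β × Bool} (hW : IsReduced (b :: W))
    {a : β × Bool} (hab : a.1 = b.1 → a.2 = b.2) :
    cancelLength (letter u a) ((b :: W).map (letter u)).prod =
      cancelLength (letter u a) (letter u b) := by
  induction W generalizing a b with
  | nil => simp
  | cons c W ih =>
    obtain ⟨hbc, hcW⟩ := isReduced_cons_cons.1 hW
    rw [map_cons, prod_cons, cancelLength_mul_eq]
    rw [ih hcW hbc]
    exact hu.cancelLength_add_cancelLength_lt a b c hab hbc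

lemma length_add_cancelLength_le {W : List (β × Bool)} {b : β × Bool} (hW : IsReduced (b :: W))
    {a : β × Bool} (hab : a.1 = b.1 → a.2 = b.2) :
    (b :: W).length + cancelLength (letter u a) (letter u b) ≤
      norm ((b :: W).map (letter u)).prod := by
  induction W generalizing a b with
  | nil =>
    have hpos : norm (letter u b) ≠ 0 := norm_eq_zero.not.2 (letter_ne_one hu.ne_one b)
    have hle := hu.two_mul_cancelLength_le a b hab
    simp only [length_singleton, map_cons, map_nil, prod_cons, prod_nil, mul_one]
    omega
  | cons c W ih =>
    obtain ⟨hbc, hcW⟩ := isReduced_cons_cons.1 hW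
    have hnorm := norm_mul_add_cancelLength (letter u b) ((c :: W).map (letter u)).prod
    rw [hu.cancelLength_prod hcW hbc] at hnorm
    have hlt := hu.cancelLength_add_cancelLength_lt a b c hab hbc
    have hle := ih hcW hbc
    rw [map_cons, prod_cons, length_cons]
    omega

theorem exists_letter_eq_of (hs : Function.Surjective (lift u)) (k : α) :
    ∃ b, letter u b = of k := by
  classical
  obtain ⟨w, hw⟩ := hs (of k)
  replace hw : (w.toWord.map (letter u)).prod = of k := by
    rwa [← mk_toWord (x := w), lift_mk] at hw
  have hred := isReduced_toWord (x := w)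
  generalize w.toWord = W at hw hred
  rcases W with _ | ⟨b, W⟩
  · simp [one_ne_of] at hw
  · have hle := hu.length_add_cancelLength_le hred (a := b) fun _ => rfl
    rw [hw, norm_of, length_cons] at hle
    obtain rfl : W = [] := length_eq_zero_iff.1 (by omega)
    exact ⟨b, by simpa using hw⟩

end IsNielsenReduced

section Complexity

variable [Fintype α]

/-- The sum of the codes of the first halves of the reduced words of `x` and `x⁻¹`. -/
noncomputable def halfCode (x : FreeGroup α) : ℕ :=
  wordCode (x.toWord.take ((norm x + 1) / 2)) + wordCode (x⁻¹.toWord.take ((norm x + 1) / 2))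

/-- The lexicographic complexity that decreases in Nielsen reduction. The second component decides
between elements of equal length which differ by half of their letters. -/
noncomputable def complexity (x : FreeGroup α) : ℕ ×ₗ ℕ :=
  toLex (norm x, halfCode x)

lemma complexity_inv (x : FreeGroup α) : complexity x⁻¹ = complexity x := by
  rw [complexity, complexity, halfCode, halfCode, inv_inv, norm_inv_eq, add_comm]

lemma norm_le_of_complexity_le {x y : FreeGroup α} (h : complexity x ≤ complexity y) :
    norm x ≤ norm y :=
  Prod.Lex.monotone_fst _ _ h

lemma halfCode_le_of_complexity_le {x y : FreeGroup α} (h : complexity x ≤ complexity y)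
    (hxy : norm y = norm x) : halfCode x ≤ halfCode y := by
  rw [complexity, complexity, Prod.Lex.toLex_le_toLex] at h
  dsimp only at h
  omega

lemma wordCode_le_of_halfCode_le {x y : FreeGroup α} {p q z : List (α × Bool)}
    (hx : x.toWord = p ++ z) (hy : y.toWord = q ++ z) (hpq : p.length = q.length)
    (hz : p.length ≤ z.length) (h : halfCode x ≤ halfCode y) : wordCode p ≤ wordCode q := by
  have hnx : norm x = p.length + z.length := by rw [FreeGroup.norm, hx, length_append]
  have hny : norm y = p.length + z.length := by rw [FreeGroup.norm, hy, length_append, hpq]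
  have htake (r : List (α × Bool)) : (invRev z ++ invRev r).take ((p.length + z.length + 1) / 2) =
      (invRev z).take ((p.length + z.length + 1) / 2) :=
    take_append_of_le_length (by rw [invRev_length]; omega)
  rw [halfCode, halfCode, toWord_inv, toWord_inv, hx, hy, hnx, hny, invRev_append, invRev_append,
    htake, htake, Nat.add_le_add_iff_right, take_append, take_append,
    take_of_length_le (l := p) (by omega), take_of_length_le (l := q) (by omega)] at h
  exact wordCode_le_of_append hpq (by rw [hpq]) h

/-- If `x` cancelled the first half of `y` and `z` the second, then `x * y` and `x` as well as
`y * z` and `z` would differ by exchanging the two halves of `y`, forcing these to be equal. -/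
lemma cancelLength_add_cancelLength_lt {x y z : FreeGroup α} (hy : y ≠ 1)
    (hxy : complexity x ≤ complexity (x * y)) (hyx : complexity y ≤ complexity (x * y))
    (hyz : complexity y ≤ complexity (y * z)) (hzy : complexity z ≤ complexity (y * z)) :
    cancelLength x y + cancelLength y z < norm y := by
  by_contra! hle
  have hx := norm_mul_add_cancelLength x y
  have hz := norm_mul_add_cancelLength y z
  have hnx := norm_le_of_complexity_le hxy
  have hnyx := norm_le_of_complexity_le hyx
  have hnyz := norm_le_of_complexity_le hyz
  have hnz := norm_le_of_complexity_le hzy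
  obtain ⟨a, p, b, hxw, hyp, hxyw, hp⟩ := exists_toWord_mul x y
  obtain ⟨a', q, b', hyq, hzw, hyzw, hq⟩ := exists_toWord_mul y z
  have hylen := congrArg length (hyp.symm.trans hyq)
  have hly : norm y = p.length + b.length := by rw [FreeGroup.norm, hyp, length_append]
  have hlx : norm x = a.length + p.length := by
    rw [FreeGroup.norm, hxw, length_append, invRev_length]
  have hlz : norm z = q.length + b'.length := by rw [FreeGroup.norm, hzw, length_append]
  rw [length_append, length_append, invRev_length] at hylen
  obtain ⟨rfl, rfl⟩ := append_inj (hyp.symm.trans hyq) (by omega)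
  have hpq : p.length = q.length := by omega
  have hqp : wordCode q ≤ wordCode p :=
    wordCode_le_of_halfCode_le hzw hyzw hpq.symm (by omega)
      (halfCode_le_of_complexity_le hzy (by omega))
  have hpq' : wordCode p ≤ wordCode q := by
    rw [← complexity_inv x, ← complexity_inv (x * y)] at hxy
    refine wordCode_le_of_halfCode_le (z := invRev a) ?_ ?_ hpq (by rw [invRev_length]; omega)
      (halfCode_le_of_complexity_le hxy (by simp only [norm_inv_eq]; omega))
    · rw [toWord_inv, hxw, invRev_append, invRev_invRev]
    · rw [toWord_inv, hxyw, invRev_append, invRev_invRev]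
  obtain rfl := eq_of_wordCode_eq hpq (le_antisymm hpq' hqp)
  rw [← mk_toWord (x := y), hyp, ← mul_mk, ← inv_mk, mul_inv_cancel] at hy
  exact hy rfl

theorem isNielsenReduced_of_complexity_le {u : β → FreeGroup α} (hne : ∀ i, u i ≠ 1)
    (hmin : ∀ a b : β × Bool, a.1 ≠ b.1 →
      complexity (letter u a) ≤ complexity (letter u a * letter u b)) :
    IsNielsenReduced u := by
  have hmin' (a b : β × Bool) (hab : a.1 ≠ b.1) :
      complexity (letter u b) ≤ complexity (letter u a * letter u b) := by
    have h := hmin (b.1, !b.2) (a.1, !a.2) hab.symm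
    rwa [letter_not, letter_not, ← _root_.mul_inv_rev, complexity_inv, complexity_inv] at h
  have hhalf (a b : β × Bool) (hab : a.1 = b.1 → a.2 = b.2) :
      2 * cancelLength (letter u a) (letter u b) ≤ norm (letter u a) ∧
        2 * cancelLength (letter u a) (letter u b) ≤ norm (letter u b) := by
    by_cases h : a.1 = b.1
    · obtain rfl : a = b := Prod.ext h (hab h)
      have := two_mul_cancelLength_self_lt (letter_ne_one hne a)
      omega
    · have := norm_mul_add_cancelLength (letter u a) (letter u b)
      have := norm_le_of_complexity_le (hmin a b h)
      have := norm_le_of_complexity_le (hmin' a b h)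
      omega
  refine ⟨hne, fun a b hab => (hhalf a b hab).2, fun a b c hab hbc => ?_⟩
  have hb := two_mul_cancelLength_self_lt (letter_ne_one hne b)
  by_cases h : a.1 = b.1
  · obtain rfl : a = b := Prod.ext h (hab h)
    have := (hhalf a c hbc).1
    omega
  by_cases h' : b.1 = c.1
  · obtain rfl : b = c := Prod.ext h' (hbc h')
    have := (hhalf a b hab).2
    omega
  exact cancelLength_add_cancelLength_lt (letter_ne_one hne b) (hmin a b h) (hmin' a b h)
    (hmin b c h') (hmin' b c h')

end Complexity

end NielsenReduced

section FreeGroupAut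

variable {α : Type*}

lemma mulAut_ext {f g : MulAut (FreeGroup α)}
    (h : ∀ k, f (FreeGroup.of k) = g (FreeGroup.of k)) : f = g :=
  MulEquiv.toMonoidHom_injective (FreeGroup.ext_hom _ _ h)

/-- The automorphism given by the images `u` of the generators under it and `v` under its
inverse. -/
def ofImages (u v : α → FreeGroup α) (huv : ∀ k, FreeGroup.lift u (v k) = FreeGroup.of k)
    (hvu : ∀ k, FreeGroup.lift v (u k) = FreeGroup.of k) : MulAut (FreeGroup α) :=
  MonoidHom.toMulEquiv (FreeGroup.lift u) (FreeGroup.lift v)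
    (FreeGroup.ext_hom _ _ fun k => by simp [hvu]) (FreeGroup.ext_hom _ _ fun k => by simp [huv])

lemma ofImages_apply (u v : α → FreeGroup α) (huv) (hvu) (k : α) :
    ofImages u v huv hvu (FreeGroup.of k) = u k :=
  FreeGroup.lift_apply_of (f := u)

/-- The automorphism permuting the generators by `σ`. -/
def permAut : Equiv.Perm α →* MulAut (FreeGroup α) where
  toFun σ := FreeGroup.freeGroupCongr σ
  map_one' := mulAut_ext fun k => by simp
  map_mul' σ τ := mulAut_ext fun k => by simp [MulAut.mul_apply]

lemma permAut_apply (σ : Equiv.Perm α) (k : α) :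
    permAut σ (FreeGroup.of k) = FreeGroup.of (σ k) := by
  simp [permAut]

lemma lift_of_zpow_of_zpow (d e : α → ℤˣ) (k : α) :
    FreeGroup.lift (fun k => FreeGroup.of k ^ ((d k : ℤˣ) : ℤ))
        (FreeGroup.of k ^ ((e k : ℤˣ) : ℤ)) =
      FreeGroup.of k ^ ((d k * e k : ℤˣ) : ℤ) := by
  rw [map_zpow, FreeGroup.lift_apply_of, ← _root_.zpow_mul, Units.val_mul]

/-- The automorphism `x_k ↦ x_k ^ d k`. -/
def signAut : (α → ℤˣ) →* MulAut (FreeGroup α) where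
  toFun d := ofImages (fun k => FreeGroup.of k ^ ((d k : ℤˣ) : ℤ))
    (fun k => FreeGroup.of k ^ ((d k : ℤˣ) : ℤ))
    (fun k => by rw [lift_of_zpow_of_zpow, Int.units_mul_self]; simp)
    (fun k => by rw [lift_of_zpow_of_zpow, Int.units_mul_self]; simp)
  map_one' := mulAut_ext fun k => by simp [ofImages_apply]
  map_mul' d e := mulAut_ext fun k => by
    rw [MulAut.mul_apply, ofImages_apply, ofImages_apply]
    exact (lift_of_zpow_of_zpow d e k).symm

lemma signAut_apply (d : α → ℤˣ) (k : α) :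
    signAut d (FreeGroup.of k) = FreeGroup.of k ^ ((d k : ℤˣ) : ℤ) :=
  FreeGroup.lift_apply_of (f := fun k => FreeGroup.of k ^ ((d k : ℤˣ) : ℤ))

lemma permAut_mul_signAut (σ : Equiv.Perm α) (d : α → ℤˣ) :
    permAut σ * signAut d = signAut (d ∘ σ.symm) * permAut σ :=
  mulAut_ext fun k => by simp [MulAut.mul_apply, signAut_apply, permAut_apply]

lemma letter_of_injective : Function.Injective (letter (FreeGroup.of : α → FreeGroup α)) := by
  classical
  have htoWord (a : α × Bool) : (letter FreeGroup.of a).toWord = [a] := by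
    rcases a with ⟨i, _ | _⟩ <;> simp [letter, FreeGroup.invRev]
  intro a b hab
  simpa [htoWord] using congrArg FreeGroup.toWord hab

lemma exists_mul_permAut_eq_signAut [Finite α] {f : MulAut (FreeGroup α)}
    (h : ∀ k, ∃ b, letter (fun i => f (FreeGroup.of i)) b = FreeGroup.of k) :
    ∃ σ d, f * permAut σ = signAut d := by
  choose b hb using h
  let d (k : α) : ℤˣ := if (b k).2 then 1 else -1
  have hpow (k : α) : f (FreeGroup.of (b k).1) = FreeGroup.of k ^ ((d k : ℤˣ) : ℤ) := by
    rw [← hb k]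
    cases hk : (b k).2 <;> simp [d, letter, hk]
  have hinj : Function.Injective fun k => (b k).1 := by
    intro k l hkl
    have hletter (m : α) : f (FreeGroup.of (b m).1) = letter FreeGroup.of (m, (b m).2) := by
      rw [hpow]
      cases hm : (b m).2 <;> simp [d, letter, hm]
    have heq := congrArg (fun i => f (FreeGroup.of i)) hkl
    simp only [hletter] at heq
    exact congrArg Prod.fst (letter_of_injective heq)
  refine ⟨Equiv.ofBijective _ (Finite.injective_iff_bijective.1 hinj), d, mulAut_ext fun k => ?_⟩
  rw [MulAut.mul_apply, permAut_apply, signAut_apply]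
  exact hpow k

variable [DecidableEq α]

lemma lift_update_of_update_of {i j : α} (h : i ≠ j) (s t : ℤ) (k : α) :
    FreeGroup.lift (Function.update FreeGroup.of j
      (FreeGroup.of i ^ s * FreeGroup.of j * FreeGroup.of i ^ t))
      (Function.update FreeGroup.of j
        (FreeGroup.of i ^ (-s) * FreeGroup.of j * FreeGroup.of i ^ (-t)) k) =
      FreeGroup.of k := by
  rcases eq_or_ne k j with rfl | hk
  · simp [h, mul_assoc]
  · simp [hk]

/-- The automorphism `x_j ↦ x_i ^ s * x_j * x_i ^ t`, taken to be the identity if `i = j`. -/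
def shear (i j : α) (s t : ℤ) : MulAut (FreeGroup α) :=
  if h : i = j then 1 else
    ofImages
      (Function.update FreeGroup.of j (FreeGroup.of i ^ s * FreeGroup.of j * FreeGroup.of i ^ t))
      (Function.update FreeGroup.of j
        (FreeGroup.of i ^ (-s) * FreeGroup.of j * FreeGroup.of i ^ (-t)))
      (lift_update_of_update_of h s t) (by simpa using lift_update_of_update_of h (-s) (-t))

lemma shear_apply_self {i j : α} (h : i ≠ j) (s t : ℤ) :
    shear i j s t (FreeGroup.of j) = FreeGroup.of i ^ s * FreeGroup.of j * FreeGroup.of i ^ t := by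
  rw [shear, dif_neg h, ofImages_apply, Function.update_self]

lemma shear_apply_of_ne {i j k : α} (h : k ≠ j) (s t : ℤ) :
    shear i j s t (FreeGroup.of k) = FreeGroup.of k := by
  rw [shear]
  split_ifs
  · rfl
  · rw [ofImages_apply, Function.update_of_ne h]

lemma eq_shear_of_apply {i j : α} (h : i ≠ j) {g : MulAut (FreeGroup α)} {s t : ℤ}
    (hj : g (FreeGroup.of j) = FreeGroup.of i ^ s * FreeGroup.of j * FreeGroup.of i ^ t)
    (hk : ∀ k, k ≠ j → g (FreeGroup.of k) = FreeGroup.of k) : g = shear i j s t := by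
  refine mulAut_ext fun k => ?_
  rcases eq_or_ne k j with rfl | hkj
  · rw [hj, shear_apply_self h]
  · rw [hk k hkj, shear_apply_of_ne hkj]

lemma shear_mul {i j : α} (h : i ≠ j) (s t s' t' : ℤ) :
    shear i j s t * shear i j s' t' = shear i j (s + s') (t + t') := by
  refine eq_shear_of_apply h ?_ fun k hk => ?_
  · simp only [MulAut.mul_apply, shear_apply_self h, _root_.map_mul, map_zpow,
      shear_apply_of_ne h, add_comm s, _root_.zpow_add, mul_assoc]
  · simp only [MulAut.mul_apply, shear_apply_of_ne hk]

lemma shear_zero {i j : α} (h : i ≠ j) : shear i j 0 0 = 1 :=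
  (eq_shear_of_apply h (by simp) fun _ _ => rfl).symm

lemma inv_shear {i j : α} (h : i ≠ j) (s t : ℤ) : (shear i j s t)⁻¹ = shear i j (-s) (-t) :=
  inv_eq_of_mul_eq_one_right (by rw [shear_mul h, add_neg_cancel, add_neg_cancel, shear_zero h])

lemma shear_zpow {i j : α} (h : i ≠ j) (s t m : ℤ) :
    shear i j s t ^ m = shear i j (m * s) (m * t) := by
  induction m with
  | zero => simp [shear_zero h]
  | succ m ih => rw [_root_.zpow_add_one, ih, shear_mul h]; congr 1 <;> ring
  | pred m ih => rw [_root_.zpow_sub_one, ih, inv_shear h, shear_mul h]; congr 1 <;> ring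

lemma permAut_mul_shear (σ : Equiv.Perm α) {i j : α} (h : i ≠ j) (s t : ℤ) :
    permAut σ * shear i j s t = shear (σ i) (σ j) s t * permAut σ := by
  refine mulAut_ext fun k => ?_
  rcases eq_or_ne k j with rfl | hk
  · simp [MulAut.mul_apply, shear_apply_self h, shear_apply_self (σ.injective.ne h), permAut_apply]
  · simp [MulAut.mul_apply, shear_apply_of_ne hk, shear_apply_of_ne (σ.injective.ne hk),
      permAut_apply]

lemma signAut_mul_shear_of_eq_one {d : α → ℤˣ} {i j : α} (h : i ≠ j) (hd : d j = 1) (s t : ℤ) :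
    signAut d * shear i j s t = shear i j (d i * s) (d i * t) * signAut d := by
  refine mulAut_ext fun k => ?_
  rcases eq_or_ne k j with rfl | hk
  · simp [MulAut.mul_apply, shear_apply_self h, signAut_apply, hd, _root_.zpow_mul]
  · simp [MulAut.mul_apply, shear_apply_of_ne hk, signAut_apply]

lemma signAut_mul_shear_of_eq_neg_one {d : α → ℤˣ} {i j : α} (h : i ≠ j) (hd : d j = -1)
    (s t : ℤ) :
    signAut d * shear i j s t = shear i j (-(d i * t)) (-(d i * s)) * signAut d := by
  refine mulAut_ext fun k => ?_
  rcases eq_or_ne k j with rfl | hk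
  · simp [MulAut.mul_apply, shear_apply_self h, signAut_apply, hd, _root_.zpow_mul, mul_assoc]
  · simp [MulAut.mul_apply, shear_apply_of_ne hk, signAut_apply]

lemma shear_mul_shear {i j k : α} (hij : i ≠ j) (hjk : j ≠ k) (hik : i ≠ k) :
    shear i j 0 1 * shear j k 0 1 = shear j k 0 1 * shear i k 0 1 * shear i j 0 1 := by
  refine mulAut_ext fun m => ?_
  rcases eq_or_ne m k with rfl | hk
  · simp [MulAut.mul_apply, shear_apply_self, shear_apply_of_ne, hij, hjk, hik, hjk.symm, mul_assoc]
  rcases eq_or_ne m j with rfl | hj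
  · simp [MulAut.mul_apply, shear_apply_self, shear_apply_of_ne, hij, hjk, hik, mul_assoc]
  · simp [MulAut.mul_apply, shear_apply_of_ne, hk, hj]

lemma commute_shear_shear {i j k l : α} (hij : i ≠ j) (hkl : k ≠ l) (hjl : j ≠ l) (hjk : j ≠ k)
    (hil : i ≠ l) (s t s' t' : ℤ) : Commute (shear i j s t) (shear k l s' t') := by
  refine mulAut_ext fun m => ?_
  rcases eq_or_ne m j with rfl | hj
  · simp [MulAut.mul_apply, shear_apply_self, shear_apply_of_ne, hij, hjl, hil, mul_assoc]
  rcases eq_or_ne m l with rfl | hl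
  · simp [MulAut.mul_apply, shear_apply_self, shear_apply_of_ne, hkl, hjl.symm, hjk.symm, mul_assoc]
  · simp [MulAut.mul_apply, shear_apply_of_ne, hj, hl]

lemma commute_shear_left_shear_right {i j k : α} (hij : i ≠ j) (hkj : k ≠ j) (s t : ℤ) :
    Commute (shear i j s 0) (shear k j 0 t) := by
  refine mulAut_ext fun m => ?_
  rcases eq_or_ne m j with rfl | hj
  · simp [MulAut.mul_apply, shear_apply_self, shear_apply_of_ne, hij, hkj, mul_assoc]
  · simp [MulAut.mul_apply, shear_apply_of_ne, hj]

lemma shear_swap {i j : α} (h : i ≠ j) : shear j i 0 1 =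
    shear i j 1 0 * permAut (Equiv.swap i j) * signAut (Pi.mulSingle j (-1)) *
      shear i j 0 1 := by
  refine (eq_shear_of_apply h.symm ?_ fun m hi => ?_).symm
  · simp [MulAut.mul_apply, shear_apply_self, shear_apply_of_ne, h, signAut_apply, permAut_apply]
  rcases eq_or_ne m j with rfl | hj
  · simp [MulAut.mul_apply, shear_apply_self, shear_apply_of_ne, h, signAut_apply,
      permAut_apply, mul_assoc]
  · simp [MulAut.mul_apply, shear_apply_of_ne, hi, hj, signAut_apply, permAut_apply,
      Equiv.swap_apply_of_ne_of_ne]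

lemma shear_mem {A : Subgroup (MulAut (FreeGroup α))} {i j : α} (h : i ≠ j)
    (hshear : shear i j 0 1 ∈ A) (hsign : ∀ d, signAut d ∈ A) (s t : ℤ) : shear i j s t ∈ A := by
  have hright (m : ℤ) : shear i j 0 m ∈ A := by
    simpa [shear_zpow h] using A.zpow_mem hshear m
  have hleft : shear i j s 0 ∈ A := by
    have hconj := signAut_mul_shear_of_eq_neg_one (d := Pi.mulSingle j (-1)) h (by simp) 0 (-s)
    simp only [Pi.mulSingle_eq_of_ne h, Units.val_one, one_mul, neg_neg, neg_zero] at hconj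
    rw [eq_mul_inv_of_mul_eq hconj.symm]
    exact mul_mem (mul_mem (hsign _) (hright _)) (inv_mem (hsign _))
  simpa [shear_mul h] using mul_mem hleft (hright t)

section TotalComplexity

variable [Fintype α]

/-- The complexity of the images of the generators, which Nielsen reduction minimizes. -/
noncomputable def totalComplexity (f : MulAut (FreeGroup α)) : ℕ ×ₗ ℕ :=
  ∑ k, complexity (f (FreeGroup.of k))

lemma complexity_le_of_totalComplexity_le {f g : MulAut (FreeGroup α)} {i : α}
    (h : ∀ k, k ≠ i → g (FreeGroup.of k) = f (FreeGroup.of k))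
    (hle : totalComplexity f ≤ totalComplexity g) :
    complexity (f (FreeGroup.of i)) ≤ complexity (g (FreeGroup.of i)) := by
  rw [totalComplexity, totalComplexity, ← Finset.add_sum_erase _ _ (Finset.mem_univ i),
    ← Finset.add_sum_erase _ (fun k => complexity (g _)) (Finset.mem_univ i),
    ← Finset.sum_congr rfl fun k hk => congrArg complexity (h k (Finset.ne_of_mem_erase hk))] at hle
  exact le_of_add_le_add_right hle

lemma isNielsenReduced_of_totalComplexity_le {f : MulAut (FreeGroup α)}
    (hmin : ∀ i j, i ≠ j → ∀ s t, totalComplexity f ≤ totalComplexity (f * shear i j s t)) :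
    IsNielsenReduced fun i => f (FreeGroup.of i) := by
  set u : α → FreeGroup α := fun i => f (FreeGroup.of i)
  have hshear {i j : α} (hij : i ≠ j) (s t : ℤ) :
      complexity (u j) ≤ complexity (u i ^ s * u j * u i ^ t) := by
    have hle := complexity_le_of_totalComplexity_le (i := j)
      (fun k hk => by rw [MulAut.mul_apply, shear_apply_of_ne hk]) (hmin i j hij s t)
    simpa [MulAut.mul_apply, shear_apply_self hij] using hle
  refine isNielsenReduced_of_complexity_le (fun i => by simp [u]) ?_
  rintro ⟨j, _ | _⟩ ⟨i, η⟩ hij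
  · rw [← complexity_inv (_ * _), _root_.mul_inv_rev]
    cases η
    · simpa [letter, complexity_inv] using hshear hij.symm 1 0
    · simpa [letter, complexity_inv] using hshear hij.symm (-1) 0
  · cases η
    · simpa [letter] using hshear hij.symm 0 (-1)
    · simpa [letter] using hshear hij.symm 0 1

end TotalComplexity

/-- Nielsen's theorem: a total complexity minimizer in a coset of `A` maps the generators to
generators up to inversion. -/
theorem eq_top_of_shear_mem_of_permAut_mem_of_signAut_mem [Finite α]
    {A : Subgroup (MulAut (FreeGroup α))}
    (hshear : ∀ i j, i ≠ j → shear i j 0 1 ∈ A) (hperm : ∀ σ, permAut σ ∈ A)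
    (hsign : ∀ d, signAut d ∈ A) : A = ⊤ := by
  cases nonempty_fintype α
  refine (Subgroup.eq_top_iff' _).2 fun g => ?_
  obtain ⟨f, hf, hmin⟩ := exists_minimalFor_of_wellFoundedLT (fun f => g⁻¹ * f ∈ A)
    totalComplexity ⟨g, by simp⟩
  have hred : IsNielsenReduced fun i => f (FreeGroup.of i) := by
    refine isNielsenReduced_of_totalComplexity_le fun i j hij s t => ?_
    have hmem : g⁻¹ * (f * shear i j s t) ∈ A := by
      rw [← mul_assoc]
      exact mul_mem hf (shear_mem hij (hshear i j hij) hsign s t)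
    exact (le_total _ _).elim id (hmin hmem)
  have hsurj : Function.Surjective (FreeGroup.lift fun i => f (FreeGroup.of i)) := by
    rw [FreeGroup.ext_hom (FreeGroup.lift _) f.toMonoidHom fun k => by simp]
    exact f.surjective
  obtain ⟨σ, d, h⟩ := exists_mul_permAut_eq_signAut (hred.exists_letter_eq_of hsurj)
  have hfA : f ∈ A := (A.mul_mem_cancel_right (hperm σ)).1 (h ▸ hsign d)
  exact inv_mem_iff.1 ((A.mul_mem_cancel_right hfA).1 hf)

end FreeGroupAut

section Magnus

lemma transvection_mulVec {ι R : Type*} [Fintype ι] [DecidableEq ι] [CommRing R] (i j : ι) (c : R)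
    (v : ι → R) : transvection i j c *ᵥ v = v + Pi.single i (c * v j) := by
  rw [transvection, add_mulVec, one_mulVec, single_mulVec]
  rfl

variable {n : ℕ}

lemma mat_shear {i j : Fin n} (h : i ≠ j) (s t : ℤ) :
    mat (shear i j s t) = transvection i j (s + t) := by
  ext a b
  rcases eq_or_ne b j with rfl | hb
  · simp only [mat, of_apply, shear_apply_self h, _root_.map_mul, map_zpow, expSum,
      FreeGroup.lift_apply_of, toAdd_mul, toAdd_zpow, toAdd_ofAdd, smul_eq_mul, transvection,
      Matrix.add_apply, Matrix.one_apply, single_apply, and_true, eq_comm (a := a)]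
    split_ifs <;> ring
  · simp [mat, shear_apply_of_ne hb, expSum, transvection, Matrix.one_apply, eq_comm, hb.symm]

lemma mat_permAut (σ : Equiv.Perm (Fin n)) : mat (permAut σ) = Equiv.Perm.permMatrix ℤ σ.symm := by
  ext a b
  simp [mat, permAut_apply, expSum, PEquiv.toMatrix_apply, Equiv.symm_apply_eq,
    eq_comm (a := a)]

lemma mat_signAut (d : Fin n → ℤˣ) : mat (signAut d) = diagonal fun k => (d k : ℤ) := by
  ext a b
  simp only [mat, of_apply, signAut_apply, expSum, map_zpow, FreeGroup.lift_apply_of, toAdd_zpow,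
    toAdd_ofAdd, smul_eq_mul, mul_ite, mul_one, mul_zero, diagonal_apply]
  grind

/-- The normal closure of the conjugations of one generator by another. -/
def conjClosure (n : ℕ) : Subgroup (FrAut n) :=
  Subgroup.normalClosure {g | ∃ i j, i ≠ j ∧ g = shear i j 1 (-1)}

instance conjClosure_normal (n : ℕ) : (conjClosure n).Normal :=
  Subgroup.normalClosure_normal

lemma conjClosure_le_ker_matHom : conjClosure n ≤ (matHom n).ker := by
  refine Subgroup.normalClosure_le_normal ?_
  rintro _ ⟨i, j, h, rfl⟩
  exact (mat_shear h 1 (-1)).trans (by simp)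

lemma mk_shear {i j : Fin n} (h : i ≠ j) (s t : ℤ) :
    (shear i j s t : FrAut n ⧸ conjClosure n) =
      (shear i j 0 1 : FrAut n ⧸ conjClosure n) ^ (s + t) := by
  have hconj : (shear i j 1 (-1) : FrAut n ⧸ conjClosure n) = 1 :=
    (QuotientGroup.eq_one_iff _).2 (Subgroup.subset_normalClosure ⟨i, j, h, rfl⟩)
  have hfactor : shear i j s t = shear i j 1 (-1) ^ s * shear i j 0 1 ^ (s + t) := by
    rw [shear_zpow h, shear_zpow h, shear_mul h]
    congr 1 <;> ring
  rw [hfactor, QuotientGroup.mk_mul, QuotientGroup.mk_zpow, QuotientGroup.mk_zpow, hconj,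
    _root_.one_zpow, one_mul]

lemma mk_shear_one_zero {i j : Fin n} (h : i ≠ j) :
    (shear i j 1 0 : FrAut n ⧸ conjClosure n) = shear i j 0 1 := by
  rw [mk_shear h, add_zero, zpow_one]

lemma commute_mk_shear_mk_shear {i j k l : Fin n} (hij : i ≠ j) (hkl : k ≠ l) (hjk : j ≠ k)
    (hil : i ≠ l) : Commute (shear i j 0 1 : FrAut n ⧸ conjClosure n) (shear k l 0 1) := by
  rcases eq_or_ne j l with rfl | hjl
  · rw [← mk_shear_one_zero hij]
    exact (commute_shear_left_shear_right hij hkl 1 1).map (QuotientGroup.mk' _)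
  · exact (commute_shear_shear hij hkl hjl hjk hil 0 1 0 1).map (QuotientGroup.mk' _)

lemma mk_signAut_mul_mk_shear (d : Fin n → ℤˣ) {i j : Fin n} (h : i ≠ j) :
    (signAut d * shear i j 0 1 : FrAut n ⧸ conjClosure n) =
      shear i j 0 1 ^ ((d i * d j : ℤˣ) : ℤ) * signAut d := by
  rw [← QuotientGroup.mk_mul]
  rcases Int.units_eq_one_or (d j) with hd | hd
  · rw [signAut_mul_shear_of_eq_one h hd, QuotientGroup.mk_mul, mk_shear h, hd]
    simp
  · rw [signAut_mul_shear_of_eq_neg_one h hd, QuotientGroup.mk_mul, mk_shear h, hd]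
    simp

/-- The action on `ℤ ^ n` of the quotient of `Aut(F_n)` by `conjClosure n`. -/
def quotAction (n : ℕ) : FrAut n ⧸ conjClosure n →* Module.End ℤ (Fin n → ℤ) :=
  QuotientGroup.lift (conjClosure n)
    (((Matrix.toLinAlgEquiv' : Matrix (Fin n) (Fin n) ℤ ≃ₐ[ℤ] _) : _ →* _).comp (matHom n))
    fun g hg => by
      rw [MonoidHom.mem_ker, MonoidHom.comp_apply,
        MonoidHom.mem_ker.1 (conjClosure_le_ker_matHom hg), _root_.map_one]

lemma quotAction_mk (g : FrAut n) (v : Fin n → ℤ) : quotAction n g v = mat g *ᵥ v := rfl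

/-- The Steinberg relations in the quotient of `Aut(F_n)` by `conjClosure n`. -/
def steinbergData (n : ℕ) : SteinbergData (Fin n) (FrAut n ⧸ conjClosure n) where
  x i j := (shear i j 0 1 : FrAut n)
  perm := (QuotientGroup.mk' _).comp permAut
  sign := (QuotientGroup.mk' _).comp signAut
  rep := quotAction n
  x_commute_x := commute_mk_shear_mk_shear
  x_mul_x hij hjk hik := by simp only [← QuotientGroup.mk_mul, shear_mul_shear hij hjk hik]
  perm_mul_x σ _ _ hij := congrArg QuotientGroup.mk (permAut_mul_shear σ hij 0 1)
  sign_mul_x := mk_signAut_mul_mk_shear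
  perm_mul_sign σ d := congrArg QuotientGroup.mk (permAut_mul_signAut σ d)
  x_eq_mul_swap hij := by
    rw [shear_swap hij, QuotientGroup.mk_mul, QuotientGroup.mk_mul, QuotientGroup.mk_mul,
      mk_shear_one_zero hij]
    rfl
  rep_x hij v := by
    rw [quotAction_mk, mat_shear hij, zero_add, transvection_mulVec, one_mul]
    ext k
    simp only [Pi.add_apply, Pi.single_apply, Function.update_apply]
    grind
  rep_perm σ v := (quotAction_mk _ v).trans (by rw [mat_permAut, permMatrix_mulVec])
  rep_sign d v := funext fun i => by
    change quotAction n (signAut d : FrAut n) v i = _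
    rw [quotAction_mk, mat_signAut, mulVec_diagonal]

lemma steinbergData_fixing_empty_univ : (steinbergData n).fixing ∅ Set.univ = ⊤ := by
  have hcomap : ((steinbergData n).fixing ∅ Set.univ).comap (QuotientGroup.mk' _) = ⊤ :=
    eq_top_of_shear_mem_of_permAut_mem_of_signAut_mem
      (fun _ _ hij => SteinbergData.x_mem_fixing (D := steinbergData n) trivial trivial hij
        (Set.notMem_empty _))
      (fun _ => SteinbergData.perm_mem_fixing (D := steinbergData n) (by simp) (by simp))
      (fun _ => SteinbergData.sign_mem_fixing (D := steinbergData n) (by simp) (by simp))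
  rw [← Subgroup.map_comap_eq_self_of_surjective (QuotientGroup.mk'_surjective (conjClosure n))
    ((steinbergData n).fixing ∅ Set.univ), hcomap,
    Subgroup.map_top_of_surjective _ (QuotientGroup.mk'_surjective _)]

theorem IA_le_conjClosure : IA n ≤ conjClosure n := by
  intro g hg
  refine (QuotientGroup.eq_one_iff g).1 ((steinbergData n).eq_one_of_rep_eq_one Finset.univ ?_ ?_)
  · rw [Finset.coe_univ, steinbergData_fixing_empty_univ]
    exact Subgroup.mem_top _
  · refine LinearMap.ext fun v => (quotAction_mk g v).trans ?_
    have hmat : mat g = 1 := congrArg Units.val (MonoidHom.mem_ker.1 hg)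
    rw [hmat, one_mulVec, Module.End.one_apply]

end Magnus

section Transvections

open scoped commutatorElement

lemma commutatorElement_mem_of_left_mem {G : Type*} [Group G] {N : Subgroup G} [N.Normal] {f : G}
    (hf : f ∈ N) (g : G) : ⁅f, g⁆ ∈ N :=
  Subgroup.commutator_le_left N ⊤ (Subgroup.commutator_mem_commutator hf (Subgroup.mem_top g))

lemma commutatorElement_mem_of_right_mem {G : Type*} [Group G] {N : Subgroup G} [N.Normal] (f : G)
    {g : G} (hg : g ∈ N) : ⁅f, g⁆ ∈ N :=
  Subgroup.commutator_le_right ⊤ N (Subgroup.commutator_mem_commutator (Subgroup.mem_top f) hg)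

lemma exists_odd_and_zero {P : ℤ → ℤ → Prop} (hleft : ∀ s x y, P x y → P (x + s * y) y)
    (hright : ∀ s x y, P x y → P x (y + s * x)) {x y : ℤ} (hxy : P x y) (hodd : Odd x ∨ Odd y) :
    ∃ d, Odd d ∧ P d 0 := by
  induction hm : y.natAbs using Nat.strong_induction_on generalizing x y with
  | _ m ih =>
    rcases eq_or_ne y 0 with rfl | hy
    · exact ⟨x, hodd.resolve_right (by decide), hxy⟩
    have hswap : P y (-x) := by
      have h := hleft 1 _ _ (hright (-1) _ _ (hleft 1 _ _ hxy))
      ring_nf at h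
      exact h
    have hdiv : P y ((-x) % y) := by
      rw [Int.emod_def, sub_eq_add_neg, mul_comm, ← neg_mul]
      exact hright _ _ _ hswap
    have hlt : ((-x) % y).natAbs < m := by
      have := Int.emod_nonneg (-x) hy
      have := Int.emod_lt (-x) hy
      omega
    refine ih _ hlt hdiv ?_ rfl
    by_contra! heven
    simp only [Int.not_odd_iff_even] at heven
    have hx : Even x := by
      rw [← even_neg, ← Int.emod_add_mul_ediv (-x) y]
      exact heven.2.add (heven.1.mul_right _)
    exact hodd.elim (Int.not_odd_iff_even.2 hx) (Int.not_odd_iff_even.2 heven.1)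

lemma exists_ne_and_apply_ne_zero {ι : Type*} [Fintype ι] [DecidableEq ι]
    {A : Matrix ι ι (ZMod 2)} (hA : IsUnit A) (hne : A ≠ 1) : ∃ i j, i ≠ j ∧ A i j ≠ 0 := by
  by_contra! hzero
  have hdiag : A = diagonal A.diag := by
    ext i j
    rcases eq_or_ne i j with rfl | hij
    · rw [diagonal_apply_eq, diag_apply]
    · rw [diagonal_apply_ne _ hij, hzero i j hij]
  have hdet : IsUnit (∏ i, A i i) := by
    have h := (Matrix.isUnit_iff_isUnit_det A).1 hA
    rwa [hdiag, det_diagonal] at h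
  refine hne (hdiag.trans (diagonal_eq_one.2 (funext fun i => ?_)))
  have hunit : ∀ a : ZMod 2, IsUnit a → a = 1 := by decide
  exact hunit _ (IsUnit.prod_univ_iff.1 hdet i)

lemma shear_mem_of_shear_mem {α : Type*} [DecidableEq α] {N : Subgroup (MulAut (FreeGroup α))}
    [N.Normal] {i j k l : α} (hij : i ≠ j) (hkl : k ≠ l) {s t : ℤ} (h : shear i j s t ∈ N) :
    shear k l s t ∈ N := by
  obtain ⟨σ, rfl, rfl⟩ := MulAction.is_two_pretransitive_iff.1
    (Equiv.Perm.isMultiplyPretransitive α 2) hij hkl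
  rw [Equiv.Perm.smul_def, Equiv.Perm.smul_def,
    ← mul_inv_eq_of_eq_mul (permAut_mul_shear σ hij s t)]
  exact Subgroup.Normal.conj_mem ‹_› _ h _

lemma shear_one_mem_of_isCoprime {α : Type*} [DecidableEq α] {N : Subgroup (MulAut (FreeGroup α))}
    {i j : α} (hij : i ≠ j) {s t : ℤ} (hst : IsCoprime s t) (hs : shear i j 0 s ∈ N)
    (ht : shear i j 0 t ∈ N) : shear i j 0 1 ∈ N := by
  obtain ⟨a, b, hab⟩ := hst
  have h := mul_mem (zpow_mem hs a) (zpow_mem ht b)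
  rwa [shear_zpow hij, shear_zpow hij, shear_mul hij, hab, mul_zero, mul_zero, add_zero] at h

variable {n : ℕ} {N : Subgroup (FrAut n)}

lemma mat_mul_mat_inv (g : FrAut n) : mat g * mat g⁻¹ = 1 := by
  rw [← mat_mul, mul_inv_cancel, mat_one]

lemma exists_odd_mat_apply {f : FrAut n} (h : (mat f).map (Int.cast : ℤ → ZMod 2) ≠ 1) :
    ∃ i j, i ≠ j ∧ Odd (mat f i j) := by
  obtain ⟨i, j, hij, hne⟩ := exists_ne_and_apply_ne_zero (redGL n 2 (ρ n f)).isUnit h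
  refine ⟨i, j, hij, Int.not_even_iff_odd.1 fun heven => hne ?_⟩
  exact (ZMod.intCast_zmod_eq_zero_iff_dvd _ 2).2 heven.two_dvd

lemma mem_of_mat_eq (hIA : IA n ≤ N) {g h : FrAut n} (hgh : mat g = mat h) (hh : h ∈ N) :
    g ∈ N := by
  have hker : h⁻¹ * g ∈ IA n := (MonoidHom.eq_iff _).1 (Units.ext hgh)
  exact (N.mul_mem_cancel_left (inv_mem hh)).1 (hIA hker)

lemma mat_mul_mul_inv_of_eq_one_add_vecMulVec {g : FrAut n} {v w : Fin n → ℤ}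
    (hg : mat g = 1 + vecMulVec v w) (f : FrAut n) :
    mat (f * g * f⁻¹) = 1 + vecMulVec (mat f *ᵥ v) (w ᵥ* mat f⁻¹) := by
  rw [mat_mul, mat_mul, hg, mul_add, mul_one, add_mul, mat_mul_mat_inv, mul_vecMulVec,
    vecMulVec_mul]

lemma mat_commutatorElement {q : Fin n} {f g : FrAut n} {y : Fin n → ℤ} (hy : y q = 0)
    (hg : mat g = 1 + vecMulVec y (Pi.single q 1))
    (hf : Pi.single q 1 ᵥ* mat f = Pi.single q 1) :
    mat ⁅f, g⁆ = 1 + vecMulVec (mat f *ᵥ y - y) (Pi.single q 1) := by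
  have hfinv : Pi.single q 1 ᵥ* mat f⁻¹ = Pi.single q 1 := by
    conv_lhs => rw [← hf]
    rw [vecMul_vecMul, mat_mul_mat_inv, vecMul_one]
  have hmul_zero (z : Fin n → ℤ) :
      vecMulVec z (Pi.single q 1) * vecMulVec y (Pi.single q 1) = 0 := by
    rw [vecMulVec_mul_vecMulVec, single_one_dotProduct, hy, zero_smul, vecMulVec_zero]
  have hginv : mat g⁻¹ = 1 - vecMulVec y (Pi.single q 1) := by
    refine (left_inv_eq_right_inv ?_ (mat_mul_mat_inv g)).symm
    rw [hg, sub_mul, one_mul, mul_add, mul_one, hmul_zero, add_zero, add_sub_cancel_right]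
  rw [commutatorElement_def, mat_mul, mat_mul_mul_inv_of_eq_one_add_vecMulVec hg, hfinv, hginv,
    mul_sub, mul_one, add_mul, one_mul, hmul_zero, add_zero, sub_vecMulVec]
  abel

lemma mat_shear_eq_one_add_vecMulVec {i j : Fin n} (hij : i ≠ j) (s : ℤ) :
    mat (shear i j 0 s) = 1 + vecMulVec (Pi.single i s) (Pi.single j 1) := by
  rw [mat_shear hij, zero_add, transvection, ← mul_one s, ← smul_eq_mul, ← smul_single,
    single_eq_single_vecMulVec_single, ← smul_vecMulVec, ← Pi.single_smul]

lemma single_vecMul_mat_shear {i j q : Fin n} (hij : i ≠ j) (hqi : q ≠ i) (s t : ℤ) :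
    Pi.single q 1 ᵥ* mat (shear i j s t) = Pi.single q 1 := by
  rw [mat_shear hij, transvection, vecMul_add, vecMul_one, add_eq_left]
  ext k
  simp [hqi.symm]

/-- The commutator of `h` with `shear i q 0 1` has matrix `1 + y e_qᵀ` with `y = (h - 1) e_i`, and
the commutator of `shear l k 0 1` with the result isolates the entry `y k`. -/
lemma shear_mem_of_single_vecMul_mat_eq [N.Normal] (hIA : IA n ≤ N) {h : FrAut n} (hh : h ∈ N)
    {q : Fin n} (hrow : Pi.single q 1 ᵥ* mat h = Pi.single q 1) {i k l : Fin n} (hiq : i ≠ q)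
    (hlk : l ≠ k) (hlq : l ≠ q) : shear l q 0 ((mat h - 1) k i) ∈ N := by
  set y : Fin n → ℤ := (mat h - 1).col i
  have hcol : mat h *ᵥ Pi.single i 1 - Pi.single i 1 = y := by
    rw [← one_mulVec (Pi.single i 1), mulVec_mulVec, mul_one, ← sub_mulVec, mulVec_single_one]
  have hy : y q = 0 := by
    have hqi : mat h q i = 0 := by
      rw [single_one_vecMul] at hrow
      exact (congrFun hrow i).trans (Pi.single_eq_of_ne hiq 1)
    rw [show y q = mat h q i - (1 : Matrix _ _ ℤ) q i from rfl, hqi, one_apply_ne hiq.symm,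
      sub_zero]
  have hmat : mat ⁅h, shear i q 0 1⁆ = 1 + vecMulVec y (Pi.single q 1) := by
    rw [mat_commutatorElement (Pi.single_eq_of_ne hiq.symm 1)
      (mat_shear_eq_one_add_vecMulVec hiq 1) hrow, hcol]
  refine mem_of_mat_eq hIA ?_ (commutatorElement_mem_of_right_mem (shear l k 0 1)
    (commutatorElement_mem_of_left_mem hh (shear i q 0 1)))
  rw [mat_commutatorElement hy hmat (single_vecMul_mat_shear hlk hlq.symm 0 1),
    mat_shear_eq_one_add_vecMulVec hlq, mat_shear hlk, transvection_mulVec, add_sub_cancel_left,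
    zero_add, one_mul]
  rfl

lemma mat_shear_mul_mul_inv_apply_self {a b c : Fin n} (hab : a ≠ b) (hcb : c ≠ b) (s : ℤ)
    (g : FrAut n) :
    mat (shear a b 0 s * g * (shear a b 0 s)⁻¹) a c = mat g a c + s * mat g b c := by
  rw [inv_shear hab, mat_mul, mat_mul, mat_shear hab, mat_shear hab,
    mul_transvection_apply_of_ne _ _ _ _ hcb, transvection_mul_apply_same, zero_add]

lemma mat_shear_mul_mul_inv_apply_of_ne {a b c k : Fin n} (hab : a ≠ b) (hcb : c ≠ b) (hka : k ≠ a)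
    (s : ℤ) (g : FrAut n) :
    mat (shear a b 0 s * g * (shear a b 0 s)⁻¹) k c = mat g k c := by
  rw [inv_shear hab, mat_mul, mat_mul, mat_shear hab, mat_shear hab,
    mul_transvection_apply_of_ne _ _ _ _ hcb, transvection_mul_apply_of_ne _ _ _ _ hka]

lemma exists_odd_mat_apply_and_mat_apply_eq_zero [N.Normal] {a b c : Fin n} (hab : a ≠ b)
    (hca : c ≠ a) (hcb : c ≠ b) {f : FrAut n} (hf : f ∈ N) (hodd : Odd (mat f a c)) :
    ∃ g ∈ N, Odd (mat g a c) ∧ mat g b c = 0 := by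
  have hleft (s x y : ℤ) : (∃ g ∈ N, mat g a c = x ∧ mat g b c = y) →
      ∃ g ∈ N, mat g a c = x + s * y ∧ mat g b c = y := by
    rintro ⟨g, hg, rfl, rfl⟩
    exact ⟨_, Subgroup.Normal.conj_mem ‹_› g hg (shear a b 0 s),
      mat_shear_mul_mul_inv_apply_self hab hcb s g,
      mat_shear_mul_mul_inv_apply_of_ne hab hcb hab.symm s g⟩
  have hright (s x y : ℤ) : (∃ g ∈ N, mat g a c = x ∧ mat g b c = y) →
      ∃ g ∈ N, mat g a c = x ∧ mat g b c = y + s * x := by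
    rintro ⟨g, hg, rfl, rfl⟩
    exact ⟨_, Subgroup.Normal.conj_mem ‹_› g hg (shear b a 0 s),
      mat_shear_mul_mul_inv_apply_of_ne hab.symm hca hab s g,
      mat_shear_mul_mul_inv_apply_self hab.symm hca s g⟩
  obtain ⟨_, hd, g, hg, rfl, hzero⟩ :=
    exists_odd_and_zero hleft hright ⟨f, hf, rfl, rfl⟩ (.inl hodd)
  exact ⟨g, hg, hd, hzero⟩

lemma mat_commutatorElement_shear {c p : Fin n} (hcp : c ≠ p) (f : FrAut n) :
    mat ⁅f, shear c p 0 1⁆ =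
      (1 + vecMulVec ((mat f).col c) ((mat f⁻¹).row p)) * transvection c p (-1) := by
  rw [commutatorElement_def, mat_mul, inv_shear hcp, mat_shear hcp, neg_zero, zero_add,
    mat_mul_mul_inv_of_eq_one_add_vecMulVec (mat_shear_eq_one_add_vecMulVec hcp 1),
    mulVec_single_one, single_one_vecMul]

lemma single_vecMul_mat_commutatorElement_shear {c p q : Fin n} (hcp : c ≠ p) (hqc : q ≠ c)
    {f : FrAut n} (hq : mat f q c = 0) :
    Pi.single q 1 ᵥ* mat ⁅f, shear c p 0 1⁆ = Pi.single q 1 := by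
  have hshear := single_vecMul_mat_shear hcp hqc 0 (-1)
  rw [mat_shear hcp, zero_add] at hshear
  rw [mat_commutatorElement_shear hcp, ← vecMul_vecMul, vecMul_add, vecMul_one, vecMul_vecMulVec,
    single_one_dotProduct, col_apply, hq, zero_smul, add_zero, hshear]

lemma exists_odd_mat_commutatorElement_shear_sub_one {c p : Fin n} (hcp : c ≠ p) {f : FrAut n}
    (hp : Odd (mat f p c)) :
    ∃ k i, (k = c ∨ k = p) ∧ (i = c ∨ i = p) ∧ Odd ((mat ⁅f, shear c p 0 1⁆ - 1) k i) := by
  set w : Fin n → ℤ := (mat f⁻¹).row p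
  have hcol_c : (mat ⁅f, shear c p 0 1⁆ - 1) p c = mat f p c * w c := by
    rw [Matrix.sub_apply, mat_commutatorElement_shear hcp, mul_transvection_apply_of_ne _ _ _ _ hcp,
      Matrix.add_apply, vecMulVec_apply, col_apply, add_sub_cancel_left]
  have hcol_p (k : Fin n) : (mat ⁅f, shear c p 0 1⁆ - 1) k p =
      mat f k c * (w p - w c) - (1 : Matrix _ _ ℤ) k c := by
    rw [Matrix.sub_apply, mat_commutatorElement_shear hcp, mul_transvection_apply_same]
    simp only [Matrix.add_apply, vecMulVec_apply, col_apply, w]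
    ring
  by_cases hwc : Odd (w c)
  · exact ⟨p, c, .inr rfl, .inl rfl, hcol_c ▸ hp.mul hwc⟩
  by_cases hw : Odd (w p - w c)
  · refine ⟨p, p, .inr rfl, .inr rfl, ?_⟩
    rw [hcol_p, one_apply_ne hcp.symm, sub_zero]
    exact hp.mul hw
  · refine ⟨c, p, .inl rfl, .inr rfl, ?_⟩
    rw [hcol_p, one_apply_eq]
    exact ((Int.not_odd_iff_even.1 hw).mul_left _).sub_odd odd_one

lemma exists_odd_shear_mem [N.Normal] (hIA : IA n ≤ N) {c p q : Fin n} (hcp : c ≠ p) (hqc : q ≠ c)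
    (hqp : q ≠ p) {f : FrAut n} (hf : f ∈ N) (hp : Odd (mat f p c)) (hq : mat f q c = 0) :
    ∃ i j s, i ≠ j ∧ Odd s ∧ shear i j 0 s ∈ N := by
  obtain ⟨k, i, hk, hi, hodd⟩ := exists_odd_mat_commutatorElement_shear_sub_one hcp hp
  obtain ⟨l, hlk, hlq⟩ : ∃ l, l ≠ k ∧ l ≠ q := by
    rcases hk with rfl | rfl
    exacts [⟨p, hcp.symm, hqp.symm⟩, ⟨c, hcp, hqc.symm⟩]
  have hiq : i ≠ q := by
    rcases hi with rfl | rfl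
    exacts [hqc.symm, hqp.symm]
  exact ⟨l, q, _, hlq, hodd, shear_mem_of_single_vecMul_mat_eq hIA
    (commutatorElement_mem_of_left_mem hf _)
    (single_vecMul_mat_commutatorElement_shear hcp hqc hq) hiq hlk hlq⟩

theorem shear_one_mem_of_map_ne_one (hn : 3 ≤ n) [N.Normal] (hIA : IA n ≤ N) {k r : Fin n}
    (hkr : k ≠ r) {m : ℕ} (hpow : shear k r 0 (2 ^ m) ∈ N) {f : FrAut n} (hf : f ∈ N)
    (hne : (mat f).map (Int.cast : ℤ → ZMod 2) ≠ 1) {i j : Fin n} (hij : i ≠ j) :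
    shear i j 0 1 ∈ N := by
  obtain ⟨p, c, hpc, hodd⟩ := exists_odd_mat_apply hne
  obtain ⟨q, hqp, hqc⟩ := Fin.exists_ne_and_ne_of_two_lt p c hn
  obtain ⟨g, hg, hp, hq⟩ :=
    exists_odd_mat_apply_and_mat_apply_eq_zero hqp.symm hpc.symm hqc.symm hf hodd
  obtain ⟨a, b, s, hab, hs, hmem⟩ := exists_odd_shear_mem hIA hpc.symm hqc hqp hg hp hq
  have hcoprime : IsCoprime s (2 ^ m) := (Int.isCoprime_two_right.2 hs).pow_right
  exact shear_mem_of_shear_mem hab hij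
    (shear_one_mem_of_isCoprime hab hcoprime hmem (shear_mem_of_shear_mem hkr hab hpow))

lemma shear_mem_of_mat_eq_pow (hIA : IA n ≤ N) {i j : Fin n} (hij : i ≠ j) {m : ℕ} {g : FrAut n}
    (hg : g ∈ N) (h : mat g = (1 + Matrix.single i j 1) ^ m) : shear i j 0 (m : ℤ) ∈ N := by
  have hpow : shear i j 0 (m : ℤ) = shear i j 0 1 ^ m := by
    simpa using (shear_zpow hij 0 1 m).symm
  refine mem_of_mat_eq hIA ?_ hg
  rw [hpow, h, ← transvection, ← zero_add (1 : ℤ), ← mat_shear hij]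
  exact map_pow (matHom n) _ m

lemma IA_le_of_conj_mem [N.Normal] {i j : Fin n} (hij : i ≠ j) {C : FrAut n} (hC : C ∈ N)
    (hCi : C (FreeGroup.of i) = FreeGroup.of j * FreeGroup.of i * (FreeGroup.of j)⁻¹)
    (hCk : ∀ k, k ≠ i → C (FreeGroup.of k) = FreeGroup.of k) : IA n ≤ N := by
  have hshear : C = shear j i 1 (-1) :=
    eq_shear_of_apply hij.symm (by rw [hCi, zpow_one, _root_.zpow_neg_one]) hCk
  refine IA_le_conjClosure.trans (Subgroup.normalClosure_le_normal ?_)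
  rintro _ ⟨k, l, hkl, rfl⟩
  exact shear_mem_of_shear_mem hij.symm hkl (hshear ▸ hC)

end Transvections

section SAut

lemma signAut_mem_of_signAut_mulSingle_mem {α : Type*} [Finite α] [DecidableEq α]
    {A : Subgroup (MulAut (FreeGroup α))} (h : ∀ j, signAut (Pi.mulSingle j (-1)) ∈ A)
    (d : α → ℤˣ) : signAut d ∈ A := by
  cases nonempty_fintype α
  rw [← Finset.univ_prod_mulSingle d, ← Subgroup.mem_comap]
  refine Subgroup.prod_mem _ fun j _ => ?_
  rw [Subgroup.mem_comap]
  rcases Int.units_eq_one_or (d j) with hd | hd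
  · rw [hd, Pi.mulSingle_one, map_one]
    exact A.one_mem
  · rw [hd]
    exact h j

lemma permAut_swap_mul_signAut_sq {α : Type*} [DecidableEq α] (i j : α) :
    (permAut (Equiv.swap i j) * signAut (Pi.mulSingle j (-1))) ^ 2 =
      signAut (Pi.mulSingle i (-1)) * signAut (Pi.mulSingle j (-1)) := by
  have hcomp : (Pi.mulSingle j (-1) : α → ℤˣ) ∘ (Equiv.swap i j).symm = Pi.mulSingle i (-1) := by
    ext k
    simp [Pi.mulSingle_apply, Equiv.swap_apply_eq_iff]
  rw [sq]
  nth_rewrite 1 [permAut_mul_signAut]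
  rw [hcomp, mul_assoc, ← mul_assoc (permAut _), ← _root_.map_mul, Equiv.swap_mul_self, map_one,
    one_mul]

variable {n : ℕ} {N : Subgroup (FrAut n)}

lemma permAut_swap_mul_signAut_mem (hIA : IA n ≤ N) (hshear : ∀ i j, i ≠ j → shear i j 0 1 ∈ N)
    {i j : Fin n} (hij : i ≠ j) :
    permAut (Equiv.swap i j) * signAut (Pi.mulSingle j (-1)) ∈ N := by
  have hleft : shear i j 1 0 ∈ N :=
    mem_of_mat_eq hIA (by rw [mat_shear hij, mat_shear hij, zero_add, add_zero]) (hshear i j hij)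
  have h := hshear j i hij.symm
  rwa [shear_swap hij, mul_assoc (shear i j 1 0), N.mul_mem_cancel_right (hshear i j hij),
    N.mul_mem_cancel_left hleft] at h

lemma eq_top_of_shear_mem_of_signAut_mulSingle_mem (hIA : IA n ≤ N)
    (hshear : ∀ i j, i ≠ j → shear i j 0 1 ∈ N) {a : Fin n}
    (ha : signAut (Pi.mulSingle a (-1)) ∈ N) : N = ⊤ := by
  have hswap {i j : Fin n} (hij : i ≠ j) := permAut_swap_mul_signAut_mem hIA hshear hij
  have hsingle (j : Fin n) : signAut (Pi.mulSingle j (-1)) ∈ N := by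
    rcases eq_or_ne a j with rfl | hj
    · exact ha
    · have h := pow_mem (hswap hj) 2
      rwa [permAut_swap_mul_signAut_sq, N.mul_mem_cancel_left ha] at h
  refine eq_top_of_shear_mem_of_permAut_mem_of_signAut_mem hshear (fun σ => ?_)
    (signAut_mem_of_signAut_mulSingle_mem hsingle)
  induction σ using Equiv.Perm.swap_induction_on with
  | one => exact map_one permAut ▸ N.one_mem
  | swap_mul σ i j hij ih =>
    rw [_root_.map_mul]
    exact mul_mem ((N.mul_mem_cancel_right (hsingle j)).1 (hswap hij)) ih

lemma val_detρ (g : FrAut n) : ((detρ n g : ℤˣ) : ℤ) = (mat g).det := rfl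

lemma shear_mem_SAut {i j : Fin n} (hij : i ≠ j) (s t : ℤ) : shear i j s t ∈ SAut n := by
  rw [SAut, MonoidHom.mem_ker, Units.ext_iff, val_detρ, mat_shear hij,
    det_transvection_of_ne i j hij, Units.val_one]

lemma detρ_signAut_mulSingle (i : Fin n) : detρ n (signAut (Pi.mulSingle i (-1))) = -1 := by
  rw [Units.ext_iff, val_detρ, mat_signAut, det_diagonal, ← Units.coe_prod,
    Fintype.prod_pi_mulSingle']

lemma IA_le_SAut : IA n ≤ SAut n := fun _ hg =>
  (congrArg GeneralLinearGroup.det (MonoidHom.mem_ker.1 hg)).trans (map_one _)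

instance SAut_normal (n : ℕ) : (SAut n).Normal := (detρ n).normal_ker

theorem SAut_le_of_shear_mem [N.Normal] (hIA : IA n ≤ N)
    (hshear : ∀ i j, i ≠ j → shear i j 0 1 ∈ N) (a : Fin n) : SAut n ≤ N := by
  intro g hg
  set δ : FrAut n := signAut (Pi.mulSingle a (-1))
  have htop : N ⊓ SAut n ⊔ Subgroup.zpowers δ = ⊤ :=
    eq_top_of_shear_mem_of_signAut_mulSingle_mem ((le_inf hIA IA_le_SAut).trans le_sup_left)
      (fun i j hij => Subgroup.mem_sup_left ⟨hshear i j hij, shear_mem_SAut hij 0 1⟩)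
      (Subgroup.mem_sup_right (Subgroup.mem_zpowers δ))
  obtain ⟨h, hh, _, ⟨m, rfl⟩, rfl⟩ :=
    Subgroup.mem_sup_of_normal_left.1 (htop ▸ Subgroup.mem_top g)
  have hdet : (-1 : ℤˣ) ^ m = 1 := by
    rw [← detρ_signAut_mulSingle a, ← map_zpow]
    exact ((SAut n).mul_mem_cancel_left hh.2).1 hg
  have hδ : δ ^ m = 1 := by
    rw [← map_zpow, ← Pi.mulSingle_zpow, hdet, Pi.mulSingle_one, map_one]
  exact (N.mul_mem_cancel_left hh.1).2 (hδ ▸ N.one_mem : δ ^ m ∈ N)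

lemma eq_top_of_SAut_le (hN : SAut n ≤ N) {f : FrAut n} (hf : f ∈ N) (hdet : detρ n f = -1) :
    N = ⊤ := by
  refine (Subgroup.eq_top_iff' N).2 fun g => ?_
  rcases Int.units_eq_one_or (detρ n g) with h | h
  · exact hN h
  · have hmem : f⁻¹ * g ∈ SAut n := (MonoidHom.eq_iff _).1 (h.trans hdet.symm)
    exact (N.mul_mem_cancel_left (inv_mem hf)).1 (hN hmem)

end SAut

theorem normalClosure_level_four_criterion_general (n : ℕ) (hn : 3 ≤ n) (m : ℕ) (f : FrAut n)
    (h1 : ∃ i j : Fin n, i ≠ j ∧ ∃ C : FrAut n,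
      C (FreeGroup.of i) = FreeGroup.of j * FreeGroup.of i * (FreeGroup.of j)⁻¹ ∧
      (∀ k, k ≠ i → C (FreeGroup.of k) = FreeGroup.of k) ∧
      C ∈ Subgroup.normalClosure {f})
    (h2 : ∃ k r : Fin n, k ≠ r ∧ ∃ u ∈ (Subgroup.normalClosure {f}).map (ρ n),
      (u : Matrix (Fin n) (Fin n) ℤ) = (1 + Matrix.single k r 1) ^ 2 ^ m)
    (h3 : ∃ Φ ∈ (Subgroup.normalClosure {f}).map (ρ n),
      ((Φ : Matrix (Fin n) (Fin n) ℤ)).map (Int.cast : ℤ → ZMod 2) ≠ 1) :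
    (detρ n f = 1 → Subgroup.normalClosure {f} = SAut n) ∧
    (detρ n f = -1 → Subgroup.normalClosure {f} = ⊤) := by
  obtain ⟨i, j, hij, C, hCi, hCk, hC⟩ := h1
  obtain ⟨k, r, hkr, _, ⟨g, hg, rfl⟩, hgmat⟩ := h2
  obtain ⟨_, ⟨φ, hφ, rfl⟩, hφne⟩ := h3
  have hIA : IA n ≤ Subgroup.normalClosure {f} := IA_le_of_conj_mem hij hC hCi hCk
  have hpow : shear k r 0 (2 ^ m) ∈ Subgroup.normalClosure {f} :=
    mod_cast shear_mem_of_mat_eq_pow hIA hkr hg hgmat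
  have hle : SAut n ≤ Subgroup.normalClosure {f} := SAut_le_of_shear_mem hIA
    (fun _ _ hab => shear_one_mem_of_map_ne_one hn hIA hkr hpow hφ hφne hab) i
  have hf : f ∈ Subgroup.normalClosure {f} := Subgroup.subset_normalClosure rfl
  refine ⟨fun hdet => le_antisymm ?_ hle, eq_top_of_SAut_le hle hf⟩
  exact Subgroup.normalClosure_le_normal (Set.singleton_subset_iff.2 hdet)

/-- **Proposition 3.10.** For `n ≥ 3`, `n ≠ 4`, and `f ∈ Aut(F_n)`: if some conjugation
`C_{x_i x_j}` lies in `N(f)`, some `e_{k,r}⁴` lies in `ρ(N(f))`, and some `Φ ∈ ρ(N(f))`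
is not congruent to the identity mod 2, then `N(f) = SAut(F_n)` if `det f̄ = 1` and
`N(f) = Aut(F_n)` if `det f̄ = -1`. -/
theorem normalClosure_level_four_criterion (n : ℕ) (hn : 3 ≤ n) (hn4 : n ≠ 4) (f : FrAut n)
    (h1 : ∃ i j : Fin n, i ≠ j ∧ ∃ C : FrAut n,
      C (FreeGroup.of i) = FreeGroup.of j * FreeGroup.of i * (FreeGroup.of j)⁻¹ ∧
      (∀ k, k ≠ i → C (FreeGroup.of k) = FreeGroup.of k) ∧
      C ∈ Subgroup.normalClosure {f})
    (h2 : ∃ k r : Fin n, k ≠ r ∧ ∃ u ∈ (Subgroup.normalClosure {f}).map (ρ n),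
      (u : Matrix (Fin n) (Fin n) ℤ) = (1 + Matrix.single k r 1) ^ 4)
    (h3 : ∃ Φ ∈ (Subgroup.normalClosure {f}).map (ρ n),
      ((Φ : Matrix (Fin n) (Fin n) ℤ)).map (Int.cast : ℤ → ZMod 2) ≠ 1) :
    (detρ n f = 1 → Subgroup.normalClosure {f} = SAut n) ∧
    (detρ n f = -1 → Subgroup.normalClosure {f} = ⊤) :=
  normalClosure_level_four_criterion_general n hn 2 f h1 h2 h3

end NormalClosurePaper
end

section
/- Let n ≥ 6 be an even integer, and let π : PSL_n(ℤ/4ℤ) → PSL_n(ℤ/2ℤ) be the homomorphism induced by entrywise reduction modulo 2. Then π does not split: there is no group homomorphism σ : PSL_n(ℤ/2ℤ) → PSL_n(ℤ/4ℤ) with π ∘ σ equal to the identity. -/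
open Matrix

namespace NormalClosurePaper

/-- The reduction homomorphism `SL_n(ℤ/4ℤ) → SL_n(ℤ/2ℤ)` induced by entrywise reduction mod 2. -/
def red42 (n : ℕ) : Matrix.SpecialLinearGroup (Fin n) (ZMod 4) →*
    Matrix.SpecialLinearGroup (Fin n) (ZMod 2) :=
  Matrix.SpecialLinearGroup.map (ZMod.castHom (show 2 ∣ 4 by norm_num) (ZMod 2))

/-!
Suppose the reduction splits, and let `X = 1 + E_{ij} + 2M` represent the image of the transvection
`1 + E_{ij}`. The square of `X` is scalar, which makes `M j i` even and `M i i + M j j` odd. Since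
`X` has determinant one, `M.trace` has the same parity as `M j i`, so it is even. On the other hand,
`X` commutes up to a scalar with a lift of `1 + E_{kl}` whenever `k, l ∉ {i, j}`; a fifth index
forces that scalar to be `1`, and then `M k k` and `M l l` have the same parity. The remaining
`n - 2` diagonal entries thus contribute an even number to `M.trace`, which is therefore odd.
-/

lemma two_mul_sum_eq_of_const_off_pair {ι R : Type*} [Fintype ι] [CommRing R] (h4 : (4 : R) = 0)
    (hι : Even (Fintype.card ι)) {i j : ι} (hij : i ≠ j) {f : ι → R} {c : R}
    (hf : ∀ l, l ≠ i → l ≠ j → 2 * f l = 2 * c) :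
    2 * ∑ l, f l = 2 * (f i + f j) := by
  have hdiff : ∑ l, 2 * (f l - c) = 2 * (f i - c) + 2 * (f j - c) :=
    Fintype.sum_eq_add i j hij fun l hl ↦ by linear_combination hf l hl.1 hl.2
  obtain ⟨p, hp⟩ := hι
  rw [← Finset.mul_sum, Finset.sum_sub_distrib, Finset.sum_const, Finset.card_univ, hp,
    nsmul_eq_mul, Nat.cast_add] at hdiff
  linear_combination hdiff + (p - 1) * c * h4

section CommRing

variable {ι R : Type*} [Fintype ι] [DecidableEq ι] [CommRing R]

lemma center_specialLinearGroup_eq_bot [Subsingleton Rˣ] :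
    Subgroup.center (Matrix.SpecialLinearGroup ι R) = ⊥ :=
  haveI := SpecialLinearGroup.center_equiv_rootsOfUnity (n := ι) (R := R).subsingleton
  Subgroup.eq_bot_of_subsingleton _

lemma exists_eq_smul_of_inv_mul_mem_center {A B : Matrix.SpecialLinearGroup ι R}
    (h : A⁻¹ * B ∈ Subgroup.center (Matrix.SpecialLinearGroup ι R)) :
    ∃ r : R, (B : Matrix ι ι R) = r • (A : Matrix ι ι R) := by
  obtain ⟨r, -, hr⟩ := Matrix.SpecialLinearGroup.mem_center_iff.1 h
  refine ⟨r, ?_⟩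
  rw [← mul_inv_cancel_left A B, Matrix.SpecialLinearGroup.coe_mul, ← hr, scalar_apply,
    ← smul_one_eq_diagonal, mul_smul_comm, mul_one]

lemma commute_transvection {i j k l : ι} (hij : i ≠ j) (hkl : k ≠ l) (hil : i ≠ l) (hjk : j ≠ k)
    (a b : R) :
    Commute (Matrix.SpecialLinearGroup.transvection hij a)
      (Matrix.SpecialLinearGroup.transvection hkl b) := by
  refine Subtype.ext ?_
  simp only [Matrix.SpecialLinearGroup.coe_mul, Matrix.SpecialLinearGroup.transvection_coe,
    mul_add, add_mul, mul_one, one_mul, single_mul_single_of_ne _ _ _ _ hjk,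
    single_mul_single_of_ne _ _ _ _ hil.symm]
  abel

lemma map_transvection {S : Type*} [CommRing S] (f : R →+* S) {i j : ι} (hij : i ≠ j) (c : R) :
    Matrix.SpecialLinearGroup.map f (Matrix.SpecialLinearGroup.transvection hij c) =
      Matrix.SpecialLinearGroup.transvection hij (f c) := by
  refine Subtype.ext ?_
  rw [Matrix.SpecialLinearGroup.map_apply_coe, Matrix.SpecialLinearGroup.transvection_coe, map_add,
    map_one, RingHom.mapMatrix_apply, Matrix.map_single, Matrix.SpecialLinearGroup.transvection_coe]

lemma transvection_sq_eq_one [CharP R 2] {i j : ι} (hij : i ≠ j) (c : R) :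
    Matrix.SpecialLinearGroup.transvection hij c ^ 2 = 1 := by
  rw [sq, ← Matrix.SpecialLinearGroup.transvection_add, CharTwo.add_self_eq_zero,
    Matrix.SpecialLinearGroup.transvection_coeff_zero]

lemma exists_eq_add_smul_of_map_eq {m n S : Type*} [CommRing S] {f : R →+* S} {ε : R}
    (hf : RingHom.ker f = Ideal.span {ε}) {X Y : Matrix m n R} (h : X.map f = Y.map f) :
    ∃ M : Matrix m n R, X = Y + ε • M := by
  have entry (a : m) (b : n) : ∃ c, X a b - Y a b = ε * c := by
    rw [← dvd_def, ← Ideal.mem_span_singleton, ← hf, RingHom.sub_mem_ker_iff]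
    exact congr_fun₂ h a b
  choose M hM using entry
  exact ⟨of M, ext fun a b ↦ sub_eq_iff_eq_add'.1 (hM a b)⟩

lemma exists_eq_transvection_add_smul_of_map_eq {S : Type*} [CommRing S] {f : R →+* S} {ε : R}
    (hf : RingHom.ker f = Ideal.span {ε}) {i j : ι} {hij : i ≠ j} {c : R}
    {X : Matrix.SpecialLinearGroup ι R}
    (hX : Matrix.SpecialLinearGroup.map f X = Matrix.SpecialLinearGroup.transvection hij (f c)) :
    ∃ M : Matrix ι ι R, (X : Matrix ι ι R) = transvection i j c + ε • M := by
  rw [← map_transvection] at hX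
  exact exists_eq_add_smul_of_map_eq hf (congrArg Subtype.val hX)

lemma det_transvection_add_smul {ε : R} (hε : ε ^ 2 = 0) {i j : ι} (hij : i ≠ j) (c : R)
    (M : Matrix ι ι R) :
    (transvection i j c + ε • M).det = 1 + ε * (M.trace - c * M j i) := by
  have hfactor : transvection i j c + ε • M =
      transvection i j c * (1 + ε • (transvection i j (-c) * M)) := by
    rw [mul_add, mul_one, mul_smul_comm, ← mul_assoc, transvection_mul_transvection_same _ _ hij,
      add_neg_cancel, transvection_zero, one_mul]
  have htrace : (transvection i j (-c) * M).trace = M.trace - c * M j i := by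
    simp [transvection, add_mul, trace_add, trace_single_mul, sub_eq_add_neg]
  rw [hfactor, det_mul, det_transvection_of_ne _ _ hij, one_mul, det_one_add_smul, hε, htrace]
  ring

lemma one_add_add_smul_mul_one_add_add_smul {A : Type*} [Ring A] [Algebra R A] {ε : R}
    (hε : ε ^ 2 = 0) {S T : A} (hST : S * T = 0) (M K : A) :
    (1 + S + ε • M) * (1 + T + ε • K) = 1 + S + T + ε • (M + K + S * K + M * T) := by
  have hexpand : (1 + S + ε • M) * (1 + T + ε • K) =
      1 + S + T + ε • (M + K + S * K + M * T) + S * T + ε ^ 2 • (M * K) := by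
    simp only [mul_add, add_mul, smul_mul_assoc, mul_smul_comm, one_mul, mul_one]
    module
  rw [hexpand, hST, hε, zero_smul, add_zero, add_zero]

lemma transvection_add_two_smul_sq (h4 : (4 : R) = 0) {i j : ι} (hij : i ≠ j) (M : Matrix ι ι R) :
    (transvection i j 1 + (2 : R) • M) ^ 2 =
      1 + (2 : R) • (single i j 1 + single i j 1 * M + M * single i j 1) := by
  have hε : (2 : R) ^ 2 = 0 := by linear_combination h4
  have hM : (2 : R) • (M + M) = 0 := by rw [← two_smul R M, smul_smul, ← sq, hε, zero_smul]
  rw [sq, transvection, one_add_add_smul_mul_one_add_add_smul hε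
    (single_mul_single_of_ne _ _ _ _ hij.symm _), add_assoc (M + M), smul_add, hM, zero_add]
  module

lemma two_mul_apply_eq_zero_of_transvection_add_sq_eq_smul_one (h4 : (4 : R) = 0) {i j k : ι}
    (hij : i ≠ j) (hki : k ≠ i) (hkj : k ≠ j) {M : Matrix ι ι R} {r : R}
    (h : (transvection i j 1 + (2 : R) • M) ^ 2 = r • (1 : Matrix ι ι R)) :
    2 * M j i = 0 := by
  rw [transvection_add_two_smul_sq h4 hij] at h
  have hkk : 1 = r := by simpa [hki, hkj, hki.symm, hkj.symm] using congr_fun₂ h k k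
  have hii : 1 + 2 * M j i = r := by simpa [hij, hij.symm] using congr_fun₂ h i i
  linear_combination hii - hkk

lemma two_mul_diag_add_diag_eq_two_of_transvection_add_sq_eq_smul_one (h4 : (4 : R) = 0) {i j : ι}
    (hij : i ≠ j) {M : Matrix ι ι R} {r : R}
    (h : (transvection i j 1 + (2 : R) • M) ^ 2 = r • (1 : Matrix ι ι R)) :
    2 * (M i i + M j j) = 2 := by
  rw [transvection_add_two_smul_sq h4 hij] at h
  have hij' : 2 * (1 + M j j + M i i) = 0 := by
    simpa [mul_add, hij, hij.symm] using congr_fun₂ h i j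
  linear_combination hij' - h4

lemma mul_diag_eq_of_transvection_add_mul_eq_smul {ε : R} (hε : ε ^ 2 = 0) {i j k l m : ι}
    (hki : k ≠ i) (hkj : k ≠ j) (hli : l ≠ i) (hlj : l ≠ j) (hkl : k ≠ l) (hmi : m ≠ i)
    (hmj : m ≠ j) (hmk : m ≠ k) (hml : m ≠ l) {M K : Matrix ι ι R} {r : R}
    (h : (transvection i j 1 + ε • M) * (transvection k l 1 + ε • K) =
      r • ((transvection k l 1 + ε • K) * (transvection i j 1 + ε • M))) :
    ε * M k k = ε * M l l := by
  rw [transvection, transvection,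
    one_add_add_smul_mul_one_add_add_smul hε (single_mul_single_of_ne _ _ _ _ hkj.symm _),
    one_add_add_smul_mul_one_add_add_smul hε (single_mul_single_of_ne _ _ _ _ hli _)] at h
  have hmm : 1 + ε * (M m m + K m m) = r * (1 + ε * (K m m + M m m)) := by
    simpa [mul_add, hmi, hmj, hmk, hml, hmi.symm, hmj.symm, hmk.symm, hml.symm]
      using congr_fun₂ h m m
  have hkl' : 1 + ε * (M k l + K k l + M k k) = r * (1 + ε * (K k l + M k l + M l l)) := by
    simpa [mul_add, hki, hki.symm, hlj, hlj.symm, hkl] using congr_fun₂ h k l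
  -- `1 + ε c` is a unit with inverse `1 - ε c`, so the `(m, m)` entry forces `r = 1`.
  obtain rfl : r = 1 := by
    linear_combination (ε * (M m m + K m m) - 1) * hmm + (r - 1) * (M m m + K m m) ^ 2 * hε
  linear_combination hkl'

end CommRing

lemma projPSL_two_injective (n : ℕ) : Function.Injective (projPSL n 2) := by
  rw [← MonoidHom.ker_eq_bot_iff, projPSL, QuotientGroup.ker_mk',
    center_specialLinearGroup_eq_bot]

lemma exists_eq_smul_of_projPSL_eq {n ℓ : ℕ} {A B : Matrix.SpecialLinearGroup (Fin n) (ZMod ℓ)}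
    (h : projPSL n ℓ A = projPSL n ℓ B) :
    ∃ r : ZMod ℓ, (B : Matrix (Fin n) (Fin n) (ZMod ℓ)) = r • (A : Matrix _ _ _) :=
  exists_eq_smul_of_inv_mul_mem_center (QuotientGroup.eq.1 h)

lemma ker_castHom_four_two :
    RingHom.ker (ZMod.castHom (show 2 ∣ 4 by norm_num) (ZMod 2)) = Ideal.span {(2 : ZMod 4)} := by
  ext x
  rw [RingHom.mem_ker, Ideal.mem_span_singleton']
  revert x
  decide

lemma exists_sq_eq_smul_one_of_projPSL_sq_eq_one {n ℓ : ℕ}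
    {X : Matrix.SpecialLinearGroup (Fin n) (ZMod ℓ)} (hX : projPSL n ℓ X ^ 2 = 1) :
    ∃ r : ZMod ℓ, (X : Matrix (Fin n) (Fin n) (ZMod ℓ)) ^ 2 = r • (1 : Matrix _ _ _) :=
  exists_eq_smul_of_projPSL_eq (A := 1) (B := X ^ 2) (by rw [map_one, map_pow, hX])

lemma two_mul_diag_eq_of_commute_projPSL {n : ℕ} (hn : 5 ≤ n) {i j k l : Fin n}
    (hki : k ≠ i) (hkj : k ≠ j) (hli : l ≠ i) (hlj : l ≠ j) (hkl : k ≠ l)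
    {X Y : Matrix.SpecialLinearGroup (Fin n) (ZMod 4)} {M K : Matrix (Fin n) (Fin n) (ZMod 4)}
    (hM : (X : Matrix (Fin n) (Fin n) (ZMod 4)) = transvection i j 1 + (2 : ZMod 4) • M)
    (hK : (Y : Matrix (Fin n) (Fin n) (ZMod 4)) = transvection k l 1 + (2 : ZMod 4) • K)
    (hcomm : Commute (projPSL n 4 Y) (projPSL n 4 X)) :
    2 * M k k = 2 * M l l := by
  have hYX : projPSL n 4 (Y * X) = projPSL n 4 (X * Y) := by rw [map_mul, map_mul, hcomm.eq]
  obtain ⟨r, hr⟩ := exists_eq_smul_of_projPSL_eq hYX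
  obtain ⟨m, -, hm⟩ : ∃ m ∈ (Finset.univ : Finset (Fin n)), m ∉ ({i, j, k, l} : Finset (Fin n)) :=
    Finset.exists_mem_notMem_of_card_lt_card <| Finset.card_le_four.trans_lt <| by
      rw [Finset.card_fin]; omega
  simp only [Finset.mem_insert, Finset.mem_singleton, not_or] at hm
  obtain ⟨hmi, hmj, hmk, hml⟩ := hm
  rw [Matrix.SpecialLinearGroup.coe_mul, Matrix.SpecialLinearGroup.coe_mul, hM, hK] at hr
  exact mul_diag_eq_of_transvection_add_mul_eq_smul rfl hki hkj hli hlj hkl hmi hmj hmk hml hr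

/-- A splitting of reduction modulo 2, as a homomorphism defined on `SL_n(ℤ/2ℤ)`, which has trivial
center: every value `τ A` is the class of some matrix over `ℤ/4ℤ` reducing to `A`. -/
def IsReductionSection {n : ℕ} (τ : Matrix.SpecialLinearGroup (Fin n) (ZMod 2) →*
    Matrix.ProjectiveSpecialLinearGroup (Fin n) (ZMod 4)) : Prop :=
  ∀ A, ∃ X, projPSL n 4 X = τ A ∧ red42 n X = A

lemma isReductionSection_comp_projPSL {n : ℕ}
    {π : Matrix.ProjectiveSpecialLinearGroup (Fin n) (ZMod 4) →*
      Matrix.ProjectiveSpecialLinearGroup (Fin n) (ZMod 2)}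
    (hπ : ∀ g, π (projPSL n 4 g) = projPSL n 2 (red42 n g))
    {σ : Matrix.ProjectiveSpecialLinearGroup (Fin n) (ZMod 2) →*
      Matrix.ProjectiveSpecialLinearGroup (Fin n) (ZMod 4)}
    (hσ : π.comp σ = MonoidHom.id _) : IsReductionSection (σ.comp (projPSL n 2)) := by
  intro A
  obtain ⟨X, hX⟩ := QuotientGroup.mk'_surjective _ (σ (projPSL n 2 A))
  have hX' : projPSL n 4 X = σ (projPSL n 2 A) := hX
  refine ⟨X, hX', projPSL_two_injective n ?_⟩
  rw [← hπ, hX']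
  exact DFunLike.congr_fun hσ _

namespace IsReductionSection

variable {n : ℕ} {τ : Matrix.SpecialLinearGroup (Fin n) (ZMod 2) →*
  Matrix.ProjectiveSpecialLinearGroup (Fin n) (ZMod 4)}

lemma exists_transvection_lift (hτ : IsReductionSection τ) {i j : Fin n} (hij : i ≠ j) :
    ∃ (X : Matrix.SpecialLinearGroup (Fin n) (ZMod 4)) (M : Matrix (Fin n) (Fin n) (ZMod 4)),
      projPSL n 4 X = τ (Matrix.SpecialLinearGroup.transvection hij 1) ∧
        (X : Matrix (Fin n) (Fin n) (ZMod 4)) = transvection i j 1 + (2 : ZMod 4) • M := by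
  obtain ⟨X, hX, hred⟩ := hτ (Matrix.SpecialLinearGroup.transvection hij 1)
  obtain ⟨M, hM⟩ := exists_eq_transvection_add_smul_of_map_eq ker_castHom_four_two (c := 1)
    (hred.trans (by rw [map_one]))
  exact ⟨X, M, hX, hM⟩

lemma two_mul_diag_eq (hτ : IsReductionSection τ) (hn : 5 ≤ n) {i j : Fin n} {hij : i ≠ j}
    {X : Matrix.SpecialLinearGroup (Fin n) (ZMod 4)} {M : Matrix (Fin n) (Fin n) (ZMod 4)}
    (hX : projPSL n 4 X = τ (Matrix.SpecialLinearGroup.transvection hij 1))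
    (hM : (X : Matrix (Fin n) (Fin n) (ZMod 4)) = transvection i j 1 + (2 : ZMod 4) • M)
    {k l : Fin n} (hki : k ≠ i) (hkj : k ≠ j) (hli : l ≠ i) (hlj : l ≠ j) :
    2 * M k k = 2 * M l l := by
  obtain rfl | hkl := eq_or_ne k l
  · rfl
  obtain ⟨Y, K, hY, hK⟩ := hτ.exists_transvection_lift hkl
  have hcomm : Commute (projPSL n 4 Y) (projPSL n 4 X) := by
    rw [hX, hY]
    exact (commute_transvection hkl hij hkj hli 1 1).map τ
  exact two_mul_diag_eq_of_commute_projPSL hn hki hkj hli hlj hkl hM hK hcomm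

end IsReductionSection

/-- **Proposition 3.12.** For even `n ≥ 6`, the homomorphism
`PSL_n(ℤ/4ℤ) → PSL_n(ℤ/2ℤ)` induced by entrywise reduction mod 2 does not split. -/
theorem psl_four_to_psl_two_not_split (n : ℕ) (hn : 6 ≤ n) (he : Even n)
    (π : Matrix.ProjectiveSpecialLinearGroup (Fin n) (ZMod 4) →*
      Matrix.ProjectiveSpecialLinearGroup (Fin n) (ZMod 2))
    (hπ : ∀ g : Matrix.SpecialLinearGroup (Fin n) (ZMod 4),
      π (projPSL n 4 g) = projPSL n 2 (red42 n g)) :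
    ¬ ∃ σ : Matrix.ProjectiveSpecialLinearGroup (Fin n) (ZMod 2) →*
        Matrix.ProjectiveSpecialLinearGroup (Fin n) (ZMod 4),
      π.comp σ = MonoidHom.id (Matrix.ProjectiveSpecialLinearGroup (Fin n) (ZMod 2)) := by
  rintro ⟨σ, hσ⟩
  have hτ : IsReductionSection (σ.comp (projPSL n 2)) := isReductionSection_comp_projPSL hπ hσ
  obtain ⟨i, j, k, hij, hki, hkj⟩ : ∃ i j k : Fin n, i ≠ j ∧ k ≠ i ∧ k ≠ j :=
    ⟨⟨0, by omega⟩, ⟨1, by omega⟩, ⟨2, by omega⟩, by simp, by simp, by simp⟩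
  obtain ⟨X, M, hX, hM⟩ := hτ.exists_transvection_lift hij
  obtain ⟨r, hr⟩ := exists_sq_eq_smul_one_of_projPSL_sq_eq_one (X := X) <| by
    rw [hX, ← map_pow, transvection_sq_eq_one, map_one]
  rw [hM] at hr
  have hji := two_mul_apply_eq_zero_of_transvection_add_sq_eq_smul_one rfl hij hki hkj hr
  have hodd := two_mul_diag_add_diag_eq_two_of_transvection_add_sq_eq_smul_one rfl hij hr
  have hdet : 1 + 2 * (M.trace - 1 * M j i) = 1 := by
    rw [← det_transvection_add_smul rfl hij, ← hM, X.det_coe]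
  have htrace : 2 * M.trace = 2 * (M i i + M j j) :=
    two_mul_sum_eq_of_const_off_pair rfl (by rwa [Fintype.card_fin]) hij fun l hli hlj ↦
      hτ.two_mul_diag_eq (by omega) hX hM hli hlj hki hkj
  have two_eq_zero : (2 : ZMod 4) = 0 := by linear_combination hdet + hji - htrace - hodd
  exact absurd two_eq_zero (by decide)

end NormalClosurePaper
end

section
/- Let M ∈ SL_2(ℤ) have finite order and let G be the normal closure of M in SL_2(ℤ). Then: if M has order 2, SL_2(ℤ)/G ≅ PSL_2(ℤ); if M has order 3, SL_2(ℤ)/G ≅ ℤ/4ℤ; if M has order 4, SL_2(ℤ)/G ≅ ℤ/3ℤ; and if M has order 6, SL_2(ℤ)/G ≅ ℤ/2ℤ. -/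
open Matrix

namespace NormalClosurePaper

/-! The elements of finite order of `SL(2, ℤ)` fix a point of the upper half-plane, so up to
conjugation they are the powers of `S`, of order `4`, and of `S * T`, of order `6`. The character
`χ` of `η ^ 2`, with values in `ℤ/12ℤ`, preserves the orders of these elements. If `M` has finite
order larger than `2`, then `S` and `T` commute modulo its normal closure `G`, and the relations
`S ^ 4 = 1` and `(S * T) ^ 3 = S ^ 2` then force `ker χ ≤ G`. Hence `SL(2, ℤ) ⧸ G` is the quotient
of `ℤ/12ℤ` by the subgroup generated by `χ M`, which is cyclic of order `12 / orderOf M`. The only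
element of order `2` is `-1`, whose normal closure is the center. -/

section GroupTheory

variable {G A : Type*} [Group G]

lemma isCyclic_quotient_of_ker_le [Group A] [IsCyclic A] {f : G →* A}
    (hf : Function.Surjective f) {N : Subgroup G} [N.Normal] (hN : f.ker ≤ N) :
    IsCyclic (G ⧸ N) := by
  have : IsCyclic (G ⧸ f.ker) := (QuotientGroup.quotientKerEquivOfSurjective f hf).isCyclic.mpr ‹_›
  exact isCyclic_of_surjective (QuotientGroup.map f.ker N (MonoidHom.id G) hN)
    (QuotientGroup.map_surjective_of_surjective _ _ _ QuotientGroup.mk_surjective hN)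

lemma normalClosure_singleton_eq_zpowers [CommGroup A] (a : A) :
    Subgroup.normalClosure {a} = Subgroup.zpowers a := by
  rw [Subgroup.zpowers_eq_closure]
  exact (Subgroup.normalClosure_le_normal Subgroup.subset_closure).antisymm
    Subgroup.closure_le_normalClosure

lemma card_quotient_normalClosure_mul_orderOf [CommGroup A] {f : G →* A}
    (hf : Function.Surjective f) {x : G} (hx : f.ker ≤ Subgroup.normalClosure {x}) :
    Nat.card (G ⧸ Subgroup.normalClosure {x}) * orderOf (f x) = Nat.card A := by
  rw [← Nat.card_zpowers, ← normalClosure_singleton_eq_zpowers, ← Set.image_singleton,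
    ← Subgroup.map_normalClosure {x} f hf, ← Subgroup.index_eq_card,
    ← Subgroup.index_map_eq _ hf hx, Subgroup.index_mul_card]

lemma orderOf_eq_of_isConj {x y : G} (h : IsConj x y) : orderOf x = orderOf y :=
  let ⟨c, hc⟩ := h
  hc.orderOf_eq (c : G)

lemma map_pow_gcd_eq_one_of_isConj {H : Type*} [Group H] {π : G →* H} {x y : G} {k : ℕ}
    (h : IsConj x (y ^ k)) (hx : π x = 1) : π y ^ (orderOf y).gcd k = 1 := by
  have hk : π (y ^ k) = 1 := isConj_one_right.mp (hx ▸ π.map_isConj h)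
  rw [pow_gcd_eq_one, ← map_pow, ← map_pow, pow_orderOf_eq_one, map_one]
  exact ⟨rfl, hk⟩

end GroupTheory

section FiniteOrderMatrices

variable {R : Type*} [CommRing R] [LinearOrder R] [IsStrictOrderedRing R]
  {A : Matrix (Fin 2) (Fin 2) R}

-- The bound on `v` is the invariant that keeps `u` nonzero.
lemma exists_pow_succ_eq_smul_add_smul_one (hdet : A.det = 1) (htr : 2 ≤ |A.trace|) (k : ℕ) :
    ∃ u v : R, A ^ (k + 1) = u • A + v • 1 ∧ |v| < |u| := by
  induction k with
  | zero => exact ⟨1, 0, by simp⟩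
  | succ k ih =>
    obtain ⟨u, v, hA, hvu⟩ := ih
    have hsq : A * A = A.trace • A - 1 := by
      have h := A.aeval_self_charpoly
      rw [charpoly_fin_two, hdet] at h
      simp only [map_add, map_sub, map_mul, map_pow, Polynomial.aeval_X, Polynomial.aeval_C,
        map_one, ← Algebra.smul_def] at h
      rw [sub_add_eq_add_sub, sub_eq_zero, sq] at h
      exact eq_sub_of_add_eq h
    refine ⟨u * A.trace + v, -u, ?_, ?_⟩
    · rw [pow_succ, hA, add_mul, smul_mul_assoc, hsq, smul_mul_assoc, one_mul]
      module
    · calc |-u| = 2 * |u| - |u| := by rw [abs_neg]; ring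
        _ < |u| * |A.trace| - |v| := by nlinarith [abs_nonneg u]
        _ ≤ |u * A.trace + v| := by
          rw [← abs_mul, ← abs_neg v, ← sub_neg_eq_add]
          exact abs_sub_abs_le_abs_sub _ _

lemma mem_range_scalar_or_isElliptic_of_pow_eq_one (hdet : A.det = 1) {n : ℕ} (hn : n ≠ 0)
    (hA : A ^ n = 1) : A ∈ Set.range (scalar (Fin 2)) ∨ A.IsElliptic := by
  refine or_iff_not_imp_right.mpr fun hell => ?_
  have htr : 2 ≤ |A.trace| := by
    rw [IsElliptic, Matrix.discr_fin_two, hdet, not_lt] at hell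
    refine le_of_sq_le_sq ?_ (abs_nonneg _)
    rw [sq_abs]
    linarith
  obtain ⟨k, rfl⟩ := Nat.exists_eq_succ_of_ne_zero hn
  obtain ⟨u, v, huv, hlt⟩ := exists_pow_succ_eq_smul_add_smul_one hdet htr k
  have hu : u ≠ 0 := abs_pos.mp ((abs_nonneg v).trans_lt hlt)
  have hentry (i j : Fin 2) : u * A i j + v * (1 : Matrix _ _ R) i j = (1 : Matrix _ _ R) i j := by
    simpa using congrFun₂ (huv.symm.trans hA) i j
  have h01 : A 0 1 = 0 := by simpa [hu] using hentry 0 1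
  have h10 : A 1 0 = 0 := by simpa [hu] using hentry 1 0
  have h11 : A 0 0 = A 1 1 := mul_left_cancel₀ hu <| by
    have h0 := hentry 0 0
    have h1 := hentry 1 1
    simp only [one_apply_eq] at h0 h1
    linear_combination h0 - h1
  refine ⟨A 0 0, ?_⟩
  ext i j
  fin_cases i <;> fin_cases j <;> simp [h01, h10, h11]

lemma exists_smul_eq_self_of_isOfFinOrder {g : GL (Fin 2) ℝ} (hdet : 0 < g.val.det)
    (hg : IsOfFinOrder g) : ∃ z : UpperHalfPlane, g • z = z := by
  obtain ⟨n, hn, hgn⟩ := isOfFinOrder_iff_pow_eq_one.mp hg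
  have hpow : g.val ^ n = 1 := by rw [← Units.val_pow_eq_pow_val, hgn, Units.val_one]
  have hdet1 : g.val.det = 1 := by
    rw [← pow_eq_one_iff_of_nonneg hdet.le hn.ne', ← det_pow, hpow, det_one]
  rcases mem_range_scalar_or_isElliptic_of_pow_eq_one hdet1 hn.ne' hpow with hscalar | hell
  · rw [← GeneralLinearGroup.mem_center_iff_val_mem_range_scalar] at hscalar
    exact ⟨UpperHalfPlane.I, UpperHalfPlane.forall_smul_eq_self_iff_mem_center.mpr hscalar _⟩
  · exact ⟨_, (UpperHalfPlane.gl_smul_eq_self_iff_eq_fixedPt hdet hell).mpr rfl⟩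

end FiniteOrderMatrices

section Involutions

open scoped MatrixGroups

variable {R : Type*} [CommRing R] [IsDomain R]

lemma eq_one_or_eq_neg_one_of_mem_center {M : SL(2, R)} (hM : M ∈ Subgroup.center SL(2, R)) :
    M = 1 ∨ M = -1 := by
  obtain ⟨r, hr, hrM⟩ := Matrix.SpecialLinearGroup.mem_center_iff.mp hM
  rw [Fintype.card_fin, sq] at hr
  rcases mul_self_eq_one_iff.mp hr with rfl | rfl
  · exact .inl <| Subtype.ext <| by simp [← hrM]
  · exact .inr <| Subtype.ext <| by simp [← hrM, map_neg]

lemma eq_one_or_eq_neg_one_of_sq_eq_one [NeZero (2 : R)] {M : SL(2, R)} (hM : M ^ 2 = 1) :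
    M = 1 ∨ M = -1 := by
  have hinv : (M : Matrix (Fin 2) (Fin 2) R) = adjugate M := by
    rw [← Matrix.SpecialLinearGroup.coe_inv, ← eq_inv_of_mul_eq_one_left ((sq M).symm.trans hM)]
  have h01 : M 0 1 = 0 := by
    have h := congrFun₂ hinv 0 1
    simpa [adjugate_fin_two, eq_neg_iff_add_eq_zero, ← two_mul, two_ne_zero] using h
  have h10 : M 1 0 = 0 := by
    have h := congrFun₂ hinv 1 0
    simpa [adjugate_fin_two, eq_neg_iff_add_eq_zero, ← two_mul, two_ne_zero] using h
  have h11 : M 0 0 = M 1 1 := by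
    simpa [adjugate_fin_two] using congrFun₂ hinv 0 0
  have hscalar : M 1 1 * M 1 1 = 1 := by
    have h := M.det_coe
    rwa [det_fin_two, h01, zero_mul, sub_zero, h11] at h
  refine (mul_self_eq_one_iff.mp hscalar).imp (fun h => ?_) (fun h => ?_) <;>
  · ext i j
    fin_cases i <;> fin_cases j <;> simp [h01, h10, h11, h]

lemma normalClosure_neg_one_eq_center :
    Subgroup.normalClosure {(-1 : SL(2, R))} = Subgroup.center SL(2, R) := by
  apply le_antisymm
  · exact Subgroup.normalClosure_le_normal <| by simp [Subgroup.mem_center_iff]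
  · intro M hM
    rcases eq_one_or_eq_neg_one_of_mem_center hM with rfl | rfl
    · exact one_mem _
    · exact Subgroup.subset_normalClosure rfl

end Involutions

section ModularGroup

open ModularGroup
open scoped MatrixGroups

lemma S_pow_four : S ^ 4 = 1 := by decide

lemma S_mul_T_pow_three : (S * T) ^ 3 = S ^ 2 := by decide

lemma orderOf_S : orderOf S = 4 := (orderOf_eq_iff (by norm_num)).mpr (by decide)

lemma orderOf_S_mul_T : orderOf (S * T) = 6 := (orderOf_eq_iff (by norm_num)).mpr (by decide)

lemma submonoidClosure_S_T_eq_top : Submonoid.closure {S, T} = ⊤ := by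
  have hS : S ∈ Submonoid.closure {S, T} := Submonoid.subset_closure (by simp)
  have hT : T ∈ Submonoid.closure {S, T} := Submonoid.subset_closure (by simp)
  have hS' : S⁻¹ = S ^ 3 := by decide
  have hT' : T⁻¹ = (S * T) ^ 5 * S := by decide
  rw [← top_le_iff, ← Subgroup.top_toSubmonoid, ← SpecialLinearGroup.SL2Z_generators,
    Subgroup.closure_toSubmonoid, Submonoid.closure_le, Set.union_subset_iff]
  refine ⟨Submonoid.subset_closure, ?_⟩
  rw [Set.inv_insert, Set.inv_singleton, Set.insert_subset_iff, Set.singleton_subset_iff, hS', hT']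
  exact ⟨pow_mem hS 3, mul_mem (pow_mem (mul_mem hS hT) 5) hS⟩

lemma exists_smul_eq_self_of_isOfFinOrder_SL2Z {M : SL(2, ℤ)} (hM : IsOfFinOrder M) :
    ∃ z : UpperHalfPlane, M • z = z :=
  exists_smul_eq_self_of_isOfFinOrder (g := SpecialLinearGroup.mapGL ℝ M)
    (by rw [← GeneralLinearGroup.val_det_apply, SpecialLinearGroup.det_mapGL]; exact one_pos)
    (MonoidHom.isOfFinOrder _ hM)

lemma exists_eq_pow_of_smul_I {M : SL(2, ℤ)}
    (hM : M • UpperHalfPlane.I = UpperHalfPlane.I) : ∃ k : ℕ, M = S ^ k := by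
  have hpow : ∀ g ∈ ({1, -1, S, -S} : Finset SL(2, ℤ)), ∃ k : Fin 4, g = S ^ (k : ℕ) := by decide
  obtain ⟨k, hk⟩ := hpow M (stabilizer_I.mp hM)
  exact ⟨k, hk⟩

lemma exists_eq_pow_of_smul_rho {M : SL(2, ℤ)}
    (hM : M • UpperHalfPlane.ρ = UpperHalfPlane.ρ) : ∃ k : ℕ, M = (S * T) ^ k := by
  have hpow : ∀ g ∈ ({1, -1, S * T, -(S * T), T⁻¹ * S, -(T⁻¹ * S)} : Finset SL(2, ℤ)),
      ∃ k : Fin 6, g = (S * T) ^ (k : ℕ) := by decide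
  obtain ⟨k, hk⟩ := hpow M (stabilizer_ρ.mp hM)
  exact ⟨k, hk⟩

lemma exists_isConj_pow_of_isOfFinOrder {M : SL(2, ℤ)} (hM : IsOfFinOrder M) :
    ∃ k : ℕ, IsConj M (S ^ k) ∨ IsConj M ((S * T) ^ k) := by
  obtain ⟨z, hz⟩ := exists_smul_eq_self_of_isOfFinOrder_SL2Z hM
  obtain ⟨g, hg⟩ := exists_smul_mem_fd z
  have hconj (h : SL(2, ℤ)) : IsConj M (h * M * h⁻¹) := isConj_iff.mpr ⟨h, rfl⟩
  have hfix (h : SL(2, ℤ)) : (h * M * h⁻¹) • h • z = h • z := by simp [mul_smul, hz]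
  by_cases hI : g • z = UpperHalfPlane.I
  · obtain ⟨k, hk⟩ := exists_eq_pow_of_smul_I (hI ▸ hfix g)
    exact ⟨k, .inl (hk ▸ hconj g)⟩
  by_cases hρ : g • z = UpperHalfPlane.ρ
  · obtain ⟨k, hk⟩ := exists_eq_pow_of_smul_rho (hρ ▸ hfix g)
    exact ⟨k, .inr (hk ▸ hconj g)⟩
  by_cases hρ' : g • z = (1 : ℝ) +ᵥ UpperHalfPlane.ρ
  · have hT : (T⁻¹ * g) • z = UpperHalfPlane.ρ := by
      rw [mul_smul, hρ', ← UpperHalfPlane.modular_T_smul, inv_smul_smul]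
    obtain ⟨k, hk⟩ := exists_eq_pow_of_smul_rho (hT ▸ hfix (T⁻¹ * g))
    exact ⟨k, .inr (hk ▸ hconj (T⁻¹ * g))⟩
  have hpm : g * M * g⁻¹ = S ^ 0 ∨ g * M * g⁻¹ = S ^ 2 := by
    have hS : -1 = S ^ 2 := by decide
    rw [pow_zero, ← hS]
    exact stabilizer_of_ne hg (hfix g) hI hρ hρ'
  rcases hpm with h | h <;> exact ⟨_, .inl (h ▸ hconj g)⟩

lemma isOfFinOrder_S : IsOfFinOrder S := orderOf_pos_iff.mp (by rw [orderOf_S]; norm_num)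

lemma isOfFinOrder_S_mul_T : IsOfFinOrder (S * T) :=
  orderOf_pos_iff.mp (by rw [orderOf_S_mul_T]; norm_num)

lemma commute_map_S_T_of_map_eq_one {H : Type*} [Group H] {π : SL(2, ℤ) →* H} {M : SL(2, ℤ)}
    (hM : 2 < orderOf M) (hπ : π M = 1) : Commute (π S) (π T) := by
  obtain ⟨k, hS | hST⟩ :=
    exists_isConj_pow_of_isOfFinOrder (orderOf_pos_iff.mp (Nat.zero_lt_of_lt hM))
  · have hgcd : Nat.gcd 4 k = 1 := by
      have hdiv : ∀ d ∈ Nat.divisors 4, 2 < 4 / d → d = 1 := by decide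
      rw [orderOf_eq_of_isConj hS, isOfFinOrder_S.orderOf_pow, orderOf_S] at hM
      exact hdiv _ (Nat.mem_divisors.mpr ⟨Nat.gcd_dvd_left 4 k, by norm_num⟩) hM
    have hS1 : π S = 1 := by
      simpa [orderOf_S, hgcd] using map_pow_gcd_eq_one_of_isConj hS hπ
    exact hS1 ▸ Commute.one_left _
  · have hgcd : Nat.gcd 6 k ∣ 2 := by
      have hdiv : ∀ d ∈ Nat.divisors 6, 2 < 6 / d → d ∣ 2 := by decide
      rw [orderOf_eq_of_isConj hST, isOfFinOrder_S_mul_T.orderOf_pow, orderOf_S_mul_T] at hM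
      exact hdiv _ (Nat.mem_divisors.mpr ⟨Nat.gcd_dvd_left 6 k, by norm_num⟩) hM
    have hsq : π (S * T) ^ 2 = 1 := by
      have h := map_pow_gcd_eq_one_of_isConj hST hπ
      rw [orderOf_S_mul_T] at h
      exact orderOf_dvd_iff_pow_eq_one.mp ((orderOf_dvd_of_pow_eq_one h).trans hgcd)
    have hTS : π T = π S := by
      have h := congrArg π S_mul_T_pow_three
      rw [map_pow, map_pow, pow_succ, hsq, one_mul, map_mul, sq] at h
      exact mul_left_cancel h
    exact hTS ▸ Commute.refl _

end ModularGroup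

section EtaCharacter

open ModularGroup
open scoped MatrixGroups

/-- For `M = !![a, b; c, d] ∈ SL(2, ℤ)` this is, modulo `12`, the exponent `e` in the
transformation law `η (M • τ) ^ 2 = exp (2 * π * i * e / 12) * (c * τ + d) * η τ ^ 2` of the
square of the Dedekind eta function. -/
def etaExponent {R : Type*} [CommRing R] (a b c d : R) : R :=
  (1 - c ^ 2) * (b * d + 3 * (c - 1) * d + c + 3) + c * (a + d - 3)

lemma map_etaExponent {R R' : Type*} [CommRing R] [CommRing R'] (φ : R →+* R') (a b c d : R) :
    φ (etaExponent a b c d) = etaExponent (φ a) (φ b) (φ c) (φ d) := by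
  simp [etaExponent, map_ofNat φ 3]

lemma zmod_twelve_eq_of_castHom_eq : ∀ {x y : ZMod 12},
    ZMod.castHom (by norm_num : 3 ∣ 12) (ZMod 3) x = ZMod.castHom (by norm_num) (ZMod 3) y →
    ZMod.castHom (by norm_num : 4 ∣ 12) (ZMod 4) x = ZMod.castHom (by norm_num) (ZMod 4) y →
    x = y := by
  decide

lemma etaExponent_S_mul {a b c d : ZMod 12} (h : a * d - b * c = 1) :
    etaExponent (-c) (-d) a b = -3 + etaExponent a b c d := by
  have h3 : ∀ a b c d : ZMod 3, a * d - b * c = 1 →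
      etaExponent (-c) (-d) a b = -3 + etaExponent a b c d := by unfold etaExponent; decide
  have h4 : ∀ a b c d : ZMod 4, a * d - b * c = 1 →
      etaExponent (-c) (-d) a b = -3 + etaExponent a b c d := by unfold etaExponent; decide
  apply zmod_twelve_eq_of_castHom_eq <;>
    simp only [map_add, map_etaExponent, map_neg, map_ofNat]
  · exact h3 _ _ _ _ (by simpa using congrArg (ZMod.castHom (by norm_num : 3 ∣ 12) (ZMod 3)) h)
  · exact h4 _ _ _ _ (by simpa using congrArg (ZMod.castHom (by norm_num : 4 ∣ 12) (ZMod 4)) h)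

lemma etaExponent_T_mul {a b c d : ZMod 12} (h : a * d - b * c = 1) :
    etaExponent (a + c) (b + d) c d = 1 + etaExponent a b c d := by
  have h3 : ∀ a b c d : ZMod 3, a * d - b * c = 1 →
      etaExponent (a + c) (b + d) c d = 1 + etaExponent a b c d := by unfold etaExponent; decide
  have h4 : ∀ a b c d : ZMod 4, a * d - b * c = 1 →
      etaExponent (a + c) (b + d) c d = 1 + etaExponent a b c d := by unfold etaExponent; decide
  apply zmod_twelve_eq_of_castHom_eq <;>
    simp only [map_add, map_etaExponent, map_one]
  · exact h3 _ _ _ _ (by simpa using congrArg (ZMod.castHom (by norm_num : 3 ∣ 12) (ZMod 3)) h)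
  · exact h4 _ _ _ _ (by simpa using congrArg (ZMod.castHom (by norm_num : 4 ∣ 12) (ZMod 4)) h)

/-- The exponent `etaExponent` of an integral matrix, reduced modulo `12` and written
multiplicatively. -/
def etaValue (M : SL(2, ℤ)) : Multiplicative (ZMod 12) :=
  .ofAdd (etaExponent (M 0 0 : ZMod 12) (M 0 1) (M 1 0) (M 1 1))

lemma det_intCast (R : Type*) [CommRing R] (M : SL(2, ℤ)) :
    (M 0 0 * M 1 1 - M 0 1 * M 1 0 : R) = 1 := by
  have h := M.det_coe
  rw [det_fin_two] at h
  exact_mod_cast congrArg (Int.cast : ℤ → R) h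

lemma etaValue_one : etaValue 1 = 1 := by
  simp [etaValue, etaExponent]

lemma etaValue_S_mul (M : SL(2, ℤ)) : etaValue (S * M) = .ofAdd (-3) * etaValue M := by
  rw [etaValue, etaValue, ← ofAdd_add, ← etaExponent_S_mul (det_intCast _ M)]
  simp [mul_apply, Fin.sum_univ_two]

lemma etaValue_T_mul (M : SL(2, ℤ)) : etaValue (T * M) = .ofAdd 1 * etaValue M := by
  rw [etaValue, etaValue, ← ofAdd_add, ← etaExponent_T_mul (det_intCast _ M)]
  simp [mul_apply, Fin.sum_univ_two]

lemma etaValue_S : etaValue S = .ofAdd (-3) := by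
  simpa [etaValue_one] using etaValue_S_mul 1

lemma etaValue_T : etaValue T = .ofAdd 1 := by
  simpa [etaValue_one] using etaValue_T_mul 1

/-- The character of `SL(2, ℤ)` by which the square of the Dedekind eta function transforms,
written with values in `ℤ/12ℤ`. -/
def etaCharacter : SL(2, ℤ) →* Multiplicative (ZMod 12) :=
  MonoidHom.ofClosureMEqTopLeft etaValue submonoidClosure_S_T_eq_top etaValue_one <| by
    rintro _ (rfl | rfl) M
    · rw [etaValue_S_mul, etaValue_S]
    · rw [etaValue_T_mul, etaValue_T]

lemma etaCharacter_S : etaCharacter S = .ofAdd (-3) := etaValue_S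

lemma etaCharacter_T : etaCharacter T = .ofAdd 1 := etaValue_T

lemma etaCharacter_surjective : Function.Surjective etaCharacter := by
  intro x
  refine ⟨T ^ x.toAdd.val, ?_⟩
  rw [map_pow, etaCharacter_T, ← ofAdd_nsmul, nsmul_one, ZMod.natCast_zmod_val, ofAdd_toAdd]

lemma ker_etaCharacter_le {H : Type*} [Group H] {π : SL(2, ℤ) →* H} (h : Commute (π S) (π T)) :
    etaCharacter.ker ≤ π.ker := by
  have hS : π S * π T ^ 3 = 1 := by
    have hrel := congrArg π S_mul_T_pow_three
    rw [map_pow, map_pow, map_mul, h.mul_pow, pow_succ, mul_assoc] at hrel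
    exact mul_eq_left.mp hrel
  have hT : π T ^ 12 = 1 := by
    have hrel := congrArg π S_pow_four
    rw [map_pow, map_one, eq_inv_of_mul_eq_one_left hS, inv_pow, inv_eq_one, ← pow_mul] at hrel
    exact hrel
  let t : Additive H := .ofMul (π T)
  let ψ : Multiplicative (ZMod 12) →* H := AddMonoidHom.toMultiplicativeLeft <|
    ZMod.lift 12 ⟨zmultiplesHom (Additive H) t,
      (natCast_zsmul t 12).trans (congrArg Additive.ofMul hT)⟩
  have hψ (m : ℤ) : ψ (.ofAdd (m : ZMod 12)) = π T ^ m := by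
    simp [ψ, t]
  have hfactor : ψ.comp etaCharacter = π := by
    refine MonoidHom.eq_of_eqOn_denseM submonoidClosure_S_T_eq_top ?_
    rintro _ (rfl | rfl)
    · rw [MonoidHom.comp_apply, etaCharacter_S, eq_inv_of_mul_eq_one_left hS]
      simpa using hψ (-3)
    · simpa [etaCharacter_T] using hψ 1
  intro g hg
  rw [MonoidHom.mem_ker, ← hfactor, MonoidHom.comp_apply, hg, map_one]

lemma orderOf_etaCharacter {M : SL(2, ℤ)} (hM : IsOfFinOrder M) :
    orderOf (etaCharacter M) = orderOf M := by
  have hS : orderOf (etaCharacter S) = orderOf S := by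
    rw [etaCharacter_S, orderOf_S]
    exact (orderOf_eq_iff (by norm_num)).mpr (by decide)
  have hST : orderOf (etaCharacter (S * T)) = orderOf (S * T) := by
    rw [map_mul, etaCharacter_S, etaCharacter_T, orderOf_S_mul_T]
    exact (orderOf_eq_iff (by norm_num)).mpr (by decide)
  obtain ⟨k, h | h⟩ := exists_isConj_pow_of_isOfFinOrder hM
  · rw [orderOf_eq_of_isConj h, isConj_iff_eq.mp (etaCharacter.map_isConj h), map_pow,
      isOfFinOrder_S.orderOf_pow, orderOf_pow, hS]
  · rw [orderOf_eq_of_isConj h, isConj_iff_eq.mp (etaCharacter.map_isConj h), map_pow,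
      isOfFinOrder_S_mul_T.orderOf_pow, orderOf_pow, hST]

end EtaCharacter

open scoped MatrixGroups in
theorem nonempty_quotient_normalClosure_mulEquiv_zmod {M : SL(2, ℤ)} {n : ℕ}
    (hM : orderOf M = n) (hn : 2 < n) :
    Nonempty (SL(2, ℤ) ⧸ Subgroup.normalClosure {M} ≃* Multiplicative (ZMod (12 / n))) := by
  set N := Subgroup.normalClosure {M}
  have hMN : QuotientGroup.mk' N M = 1 :=
    (QuotientGroup.eq_one_iff M).mpr (Subgroup.subset_normalClosure rfl)
  have hker : etaCharacter.ker ≤ N := by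
    simpa only [QuotientGroup.ker_mk'] using
      ker_etaCharacter_le (commute_map_S_T_of_map_eq_one (hM ▸ hn) hMN)
  have hcard : Nat.card (SL(2, ℤ) ⧸ N) = 12 / n := by
    have h := card_quotient_normalClosure_mul_orderOf etaCharacter_surjective hker
    rw [orderOf_etaCharacter (orderOf_pos_iff.mp (by omega)), hM,
      Nat.card_congr Multiplicative.toAdd, Nat.card_zmod] at h
    exact Nat.eq_div_of_mul_eq_left (by omega) h
  have hcyclic := isCyclic_quotient_of_ker_le etaCharacter_surjective hker
  exact hcard ▸ ⟨(zmodCyclicMulEquiv hcyclic).symm⟩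

/-- For a finite order `M ∈ SL_2(ℤ)` with normal closure `G`, the quotient `SL_2(ℤ)/G` is
`PSL_2(ℤ)`, `ℤ/4ℤ`, `ℤ/3ℤ`, `ℤ/2ℤ` according as `M` has order `2`, `3`, `4`, `6`. -/
theorem quotient_by_normalClosure_of_finite_order_SL2
    (M : Matrix.SpecialLinearGroup (Fin 2) ℤ) (hM : IsOfFinOrder M) :
    (orderOf M = 2 → Nonempty
      ((Matrix.SpecialLinearGroup (Fin 2) ℤ ⧸ Subgroup.normalClosure {M}) ≃*
        Matrix.ProjectiveSpecialLinearGroup (Fin 2) ℤ)) ∧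
    (orderOf M = 3 → Nonempty
      ((Matrix.SpecialLinearGroup (Fin 2) ℤ ⧸ Subgroup.normalClosure {M}) ≃*
        Multiplicative (ZMod 4))) ∧
    (orderOf M = 4 → Nonempty
      ((Matrix.SpecialLinearGroup (Fin 2) ℤ ⧸ Subgroup.normalClosure {M}) ≃*
        Multiplicative (ZMod 3))) ∧
    (orderOf M = 6 → Nonempty
      ((Matrix.SpecialLinearGroup (Fin 2) ℤ ⧸ Subgroup.normalClosure {M}) ≃*
        Multiplicative (ZMod 2))) := by
  refine ⟨fun h => ?_, fun h => ?_, fun h => ?_, fun h => ?_⟩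
  · obtain ⟨hsq, hne⟩ := orderOf_eq_prime_iff.mp h
    obtain rfl := (eq_one_or_eq_neg_one_of_sq_eq_one hsq).resolve_left hne
    exact ⟨QuotientGroup.quotientMulEquivOfEq normalClosure_neg_one_eq_center⟩
  · exact nonempty_quotient_normalClosure_mulEquiv_zmod h (by norm_num)
  · exact nonempty_quotient_normalClosure_mulEquiv_zmod h (by norm_num)
  · exact nonempty_quotient_normalClosure_mulEquiv_zmod h (by norm_num)

end NormalClosurePaper
end
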